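/- arXiv:cs/0510029 — 2 statements merged into one kernel-verified Lean document; each statement's English description precedes it below -/
import Mathlib

section
/- If random variables α and β on a finite probability space are conditionally independent of order k, and γ is an arbitrary random variable on the same probability space, then H(γ) ≤ 2^k·H(γ|α) + 2^k·H(γ|β). -/
open scoped BigOperators Classical

noncomputable section

/-- Probability of an event `E` under a distribution `μ` on a finite sample space `Ω`. -/
def pr {Ω : Type} [Fintype Ω] (μ : Ω → ℝ) (E : Ω → Prop) : ℝ :=
  ∑ ω, if E ω then μ ω else 0

/-- `μ` is a probability distribution on the finite space `Ω`. -/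
def IsProb {Ω : Type} [Fintype Ω] (μ : Ω → ℝ) : Prop :=
  (∀ ω, 0 ≤ μ ω) ∧ ∑ ω, μ ω = 1

/-- Shannon entropy (base 2) of a random variable `α` on a finite probability space. -/
def ent {Ω A : Type} [Fintype Ω] (μ : Ω → ℝ) (α : Ω → A) : ℝ :=
  -∑ a ∈ Finset.univ.image α,
      pr μ (fun ω => α ω = a) * Real.logb 2 (pr μ (fun ω => α ω = a))

/-- Conditional entropy `H(α | β)`. -/
def condEnt {Ω A B : Type} [Fintype Ω] (μ : Ω → ℝ) (α : Ω → A) (β : Ω → B) : ℝ :=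
  ent μ (fun ω => (α ω, β ω)) - ent μ β

/-- Mutual information `I(α : β)`. -/
def mutualInfo {Ω A B : Type} [Fintype Ω] (μ : Ω → ℝ) (α : Ω → A) (β : Ω → B) : ℝ :=
  ent μ α + ent μ β - ent μ (fun ω => (α ω, β ω))

/-- Conditional mutual information `I(α : β | γ)`. -/
def condMutualInfo {Ω A B C : Type} [Fintype Ω] (μ : Ω → ℝ)
    (α : Ω → A) (β : Ω → B) (γ : Ω → C) : ℝ :=
  condEnt μ α γ + condEnt μ β γ - condEnt μ (fun ω => (α ω, β ω)) γ

/-- Independence of two random variables. -/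
def Indep {Ω A B : Type} [Fintype Ω] (μ : Ω → ℝ) (α : Ω → A) (β : Ω → B) : Prop :=
  ∀ (a : A) (b : B),
    pr μ (fun ω => α ω = a ∧ β ω = b) =
      pr μ (fun ω => α ω = a) * pr μ (fun ω => β ω = b)

/-- Auxiliary form of "conditionally independent of order `k`" (explicit `Fintype`):
`α` and `β` are conditionally independent of order `0` if they are independent,
and of order `k + 1` if on some finite probability space there are random variables
`α₀, β₀, α*, β*` such that `(α₀, β₀)` has the same joint distribution as `(α, β)`,
`I(α₀ : β₀ | α*) = 0`, `I(α₀ : β₀ | β*) = 0`, and `α*, β*` are conditionally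
independent of order `k`. -/
def CondIndepOrderAux : ℕ → (Ω A B : Type) → Fintype Ω → (Ω → ℝ) → (Ω → A) → (Ω → B) → Prop
  | 0, _Ω, _A, _B, iΩ, μ, α, β => @Indep _ _ _ iΩ μ α β
  | k+1, _Ω, A, B, iΩ, μ, α, β =>
      ∃ (Ω' A' B' : Type) (iΩ' : Fintype Ω') (μ' : Ω' → ℝ)
        (α₀ : Ω' → A) (β₀ : Ω' → B) (αs : Ω' → A') (βs : Ω' → B'),
        @IsProb _ iΩ' μ' ∧
        (∀ (a : A) (b : B),
          @pr _ iΩ' μ' (fun ω => α₀ ω = a ∧ β₀ ω = b) =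
            @pr _ iΩ μ (fun ω => α ω = a ∧ β ω = b)) ∧
        @condMutualInfo _ _ _ _ iΩ' μ' α₀ β₀ αs = 0 ∧
        @condMutualInfo _ _ _ _ iΩ' μ' α₀ β₀ βs = 0 ∧
        CondIndepOrderAux k Ω' A' B' iΩ' μ' αs βs

/-- Random variables `α` and `β` on a finite probability space are
conditionally independent of order `k`. -/
def CondIndepOrder {Ω A B : Type} [iΩ : Fintype Ω]
    (μ : Ω → ℝ) (α : Ω → A) (β : Ω → B) (k : ℕ) : Prop :=
  CondIndepOrderAux k Ω A B iΩ μ α β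

/-- An `m × n` joint probability matrix: nonnegative entries summing to `1`. -/
def IsJointProbMatrix {m n : ℕ} (M : Matrix (Fin m) (Fin n) ℝ) : Prop :=
  (∀ i j, 0 ≤ M i j) ∧ ∑ i, ∑ j, M i j = 1

/-- `M` is the joint probability matrix of the pair `(α, β)`. -/
def IsJointMatrixOf {Ω : Type} [Fintype Ω] {m n : ℕ} (M : Matrix (Fin m) (Fin n) ℝ)
    (μ : Ω → ℝ) (α : Ω → Fin m) (β : Ω → Fin n) : Prop :=
  ∀ i j, M i j = pr μ (fun ω => α ω = i ∧ β ω = j)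

/-- `M` is a block matrix: rows and columns can be partitioned into two nonempty
parts so that the two diagonal blocks each contain a nonzero element and all
entries outside the diagonal blocks vanish. -/
def IsBlockMatrix {m n : ℕ} (M : Matrix (Fin m) (Fin n) ℝ) : Prop :=
  ∃ (I₁ : Finset (Fin m)) (J₁ : Finset (Fin n)),
    I₁.Nonempty ∧ I₁ᶜ.Nonempty ∧ J₁.Nonempty ∧ J₁ᶜ.Nonempty ∧
    (∃ i ∈ I₁, ∃ j ∈ J₁, M i j ≠ 0) ∧
    (∃ i ∈ I₁ᶜ, ∃ j ∈ J₁ᶜ, M i j ≠ 0) ∧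
    (∀ i j, ((i ∈ I₁ ∧ j ∈ J₁ᶜ) ∨ (i ∈ I₁ᶜ ∧ j ∈ J₁)) → M i j = 0)

/-- `M` is a good matrix: the joint probability matrix of some pair of
conditionally independent random variables (of some finite order). -/
def IsGoodMatrix {m n : ℕ} (M : Matrix (Fin m) (Fin n) ℝ) : Prop :=
  ∃ (Ω : Type) (iΩ : Fintype Ω) (μ : Ω → ℝ) (α : Ω → Fin m) (β : Ω → Fin n) (k : ℕ),
    @IsProb _ iΩ μ ∧ @IsJointMatrixOf _ iΩ _ _ M μ α β ∧
    @CondIndepOrder _ _ _ iΩ μ α β k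

/-- A stochastic matrix: nonnegative entries, all row sums equal to `1`. -/
def IsStochastic {m n : ℕ} (A : Matrix (Fin m) (Fin n) ℝ) : Prop :=
  (∀ i j, 0 ≤ A i j) ∧ ∀ i, ∑ j, A i j = 1

/-- The matrix `D_ε`: diagonal entries `1/2 - ε`, off-diagonal entries `ε`. -/
def Dmat (ε : ℝ) : Matrix (Fin 2) (Fin 2) ℝ :=
  fun i j => if i = j then 1/2 - ε else ε

/-- The distribution of `n` i.i.d. trials, each distributed according to `μ`. -/
def iidMeasure {Ω : Type} [Fintype Ω] (μ : Ω → ℝ) (n : ℕ) : (Fin n → Ω) → ℝ :=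
  fun ωv => ∏ i, μ (ωv i)

/-- The sequence of `n` coordinatewise copies of a random variable. -/
def iidRV {Ω A : Type} (α : Ω → A) (n : ℕ) : (Fin n → Ω) → (Fin n → A) :=
  fun ωv i => α (ωv i)

/-- `(u, v, w)` belongs to the rate region of the pair `(α, β)`. -/
def InRateRegion {Ω A B : Type} [Fintype Ω] (μ : Ω → ℝ) (α : Ω → A) (β : Ω → B)
    (u v w : ℝ) : Prop :=
  0 ≤ u ∧ 0 ≤ v ∧ 0 ≤ w ∧
  ∀ ε > (0:ℝ), ∀ δ > (0:ℝ), ∃ n₀ : ℕ, ∀ n ≥ n₀,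
    ∃ (t : (Fin n → A) × (Fin n → B) → (Fin ⌊(u + δ) * n⌋₊ → Bool))
      (f : (Fin n → A) × (Fin n → B) → (Fin ⌊(v + δ) * n⌋₊ → Bool))
      (g : (Fin n → A) × (Fin n → B) → (Fin ⌊(w + δ) * n⌋₊ → Bool))
      (r : (Fin ⌊(u + δ) * n⌋₊ → Bool) × (Fin ⌊(v + δ) * n⌋₊ → Bool) → (Fin n → A))
      (s : (Fin ⌊(u + δ) * n⌋₊ → Bool) × (Fin ⌊(w + δ) * n⌋₊ → Bool) → (Fin n → B)),
      pr (iidMeasure μ n) (fun ωv =>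
          r (t (iidRV α n ωv, iidRV β n ωv), f (iidRV α n ωv, iidRV β n ωv)) = iidRV α n ωv)
        > 1 - ε ∧
      pr (iidMeasure μ n) (fun ωv =>
          s (t (iidRV α n ωv, iidRV β n ωv), g (iidRV α n ωv, iidRV β n ωv)) = iidRV β n ωv)
        > 1 - ε

/-- The support of a matrix: the set of positions of its nonzero entries. -/
def msupport {m n : ℕ} (M : Matrix (Fin m) (Fin n) ℝ) : Set (Fin m × Fin n) :=
  {p | M p.1 p.2 ≠ 0}

/-- An r-matrix: nonnegative entries and rectangular support. -/
def IsRMatrix {m n : ℕ} (M : Matrix (Fin m) (Fin n) ℝ) : Prop :=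
  (∀ i j, 0 ≤ M i j) ∧ ∃ (A : Set (Fin m)) (B : Set (Fin n)), msupport M = A ×ˢ B

/-- An r-decomposition of `M`: an expression of `M` as a finite sum of r-matrices
such that the supports of consecutive summands intersect. -/
def IsRDecomposition {m n : ℕ} (M : Matrix (Fin m) (Fin n) ℝ)
    (l : ℕ) (Ms : Fin l → Matrix (Fin m) (Fin n) ℝ) : Prop :=
  M = ∑ i, Ms i ∧ (∀ i, IsRMatrix (Ms i)) ∧
  ∀ (i : ℕ) (h : i + 1 < l),
    (msupport (Ms ⟨i, Nat.lt_of_succ_lt h⟩) ∩ msupport (Ms ⟨i + 1, h⟩)).Nonempty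

end

noncomputable section

lemma sum_ite_eq_pr {Ω : Type} [Fintype Ω] (μ : Ω → ℝ) (E : Ω → Prop) [DecidablePred E] :
    (∑ ω, if E ω then μ ω else 0) = pr μ E := by
  unfold pr
  exact Finset.sum_congr rfl fun ω _ => by congr

lemma pr_nonneg_aux {Ω : Type} [Fintype Ω] {μ : Ω → ℝ} (hμ : ∀ ω, 0 ≤ μ ω) (E : Ω → Prop) :
    0 ≤ pr μ E := by
  unfold pr
  exact Finset.sum_nonneg fun ω _ => by split_ifs <;> simp [hμ ω]

lemma pr_mono_aux {Ω : Type} [Fintype Ω] {μ : Ω → ℝ} (hμ : ∀ ω, 0 ≤ μ ω) {E F : Ω → Prop}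
    (h : ∀ ω, E ω → F ω) : pr μ E ≤ pr μ F := by
  unfold pr
  refine Finset.sum_le_sum fun ω _ => ?_
  by_cases hE : E ω
  · simp [hE, h ω hE]
  · simp only [hE, if_false]
    split_ifs <;> simp [hμ ω]

lemma pr_pos_aux {Ω : Type} [Fintype Ω] {μ : Ω → ℝ} (hμ : ∀ ω, 0 ≤ μ ω) {E : Ω → Prop}
    {ω : Ω} (hω : μ ω ≠ 0) (hE : E ω) : 0 < pr μ E := by
  have h0 : 0 < μ ω := lt_of_le_of_ne (hμ ω) (Ne.symm hω)
  have : (if E ω then μ ω else 0) ≤ pr μ E := by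
    unfold pr
    exact Finset.single_le_sum (f := fun ω => if E ω then μ ω else 0)
      (fun ω _ => by split_ifs <;> simp [hμ ω]) (Finset.mem_univ ω)
  rw [if_pos hE] at this
  linarith

lemma pr_congr_ae {Ω : Type} [Fintype Ω] {μ : Ω → ℝ} {E F : Ω → Prop}
    (h : ∀ ω, μ ω ≠ 0 → (E ω ↔ F ω)) : pr μ E = pr μ F := by
  unfold pr
  refine Finset.sum_congr rfl fun ω _ => ?_
  by_cases h0 : μ ω = 0
  · simp [h0]
  · simp [h ω h0]

/-- Pointwise form of the entropy. -/
lemma ent_eq_sum {Ω A : Type} [Fintype Ω] (μ : Ω → ℝ) (X : Ω → A) :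
    ent μ X = -∑ ω, μ ω * Real.logb 2 (pr μ (fun ω' => X ω' = X ω)) := by
  unfold ent
  congr 1
  rw [← Finset.sum_fiberwise_of_maps_to (s := Finset.univ) (t := Finset.univ.image X) (g := X)
    (fun ω _ => Finset.mem_image_of_mem X (Finset.mem_univ ω))]
  refine Finset.sum_congr rfl fun a _ => ?_
  conv_lhs => enter [1]; unfold pr
  rw [← Finset.sum_filter, Finset.sum_mul]
  refine Finset.sum_congr rfl fun ω hω => ?_
  rw [(Finset.mem_filter.1 hω).2]

/-- Entropy depends only on the partition. -/
lemma ent_congr_part {Ω A B : Type} [Fintype Ω] (μ : Ω → ℝ) (X : Ω → A) (Y : Ω → B)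
    (h : ∀ ω ω', X ω = X ω' ↔ Y ω = Y ω') : ent μ X = ent μ Y := by
  simp only [ent_eq_sum, h]

/-- Entropy depends only on the law. -/
lemma ent_congr_law {Ω Ω' A : Type} [Fintype Ω] [Fintype Ω'] (μ : Ω → ℝ) (μ' : Ω' → ℝ)
    (X : Ω → A) (Y : Ω' → A)
    (h : ∀ a, pr μ (fun ω => X ω = a) = pr μ' (fun ω => Y ω = a)) : ent μ X = ent μ' Y := by
  unfold ent
  congr 1
  have key : ∀ {Ω : Type} [Fintype Ω] (μ : Ω → ℝ) (X : Ω → A) (S : Finset A),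
      Finset.univ.image X ⊆ S →
      ∑ a ∈ Finset.univ.image X, pr μ (fun ω => X ω = a) * Real.logb 2 (pr μ (fun ω => X ω = a))
      = ∑ a ∈ S, pr μ (fun ω => X ω = a) * Real.logb 2 (pr μ (fun ω => X ω = a)) := by
    intro Ω _ μ X S hS
    refine Finset.sum_subset hS fun a _ ha => ?_
    have : pr μ (fun ω => X ω = a) = 0 := by
      unfold pr
      refine Finset.sum_eq_zero fun ω _ => ?_
      rw [if_neg]
      rintro rfl
      exact ha (Finset.mem_image_of_mem X (Finset.mem_univ ω))
    rw [this, zero_mul]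
  rw [key μ X (Finset.univ.image X ∪ Finset.univ.image Y) Finset.subset_union_left,
    key μ' Y (Finset.univ.image X ∪ Finset.univ.image Y) Finset.subset_union_right]
  simp only [h]

lemma ent_mono_aux {Ω A B : Type} [Fintype Ω] {μ : Ω → ℝ} (hμ : ∀ ω, 0 ≤ μ ω)
    (X : Ω → A) (Y : Ω → B) (h : ∀ ω ω', Y ω = Y ω' → X ω = X ω') : ent μ X ≤ ent μ Y := by
  rw [ent_eq_sum, ent_eq_sum, neg_le_neg_iff]
  refine Finset.sum_le_sum fun ω _ => ?_
  by_cases h0 : μ ω = 0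
  · simp [h0]
  · refine mul_le_mul_of_nonneg_left ?_ (hμ ω)
    exact Real.logb_le_logb_of_le (by norm_num) (pr_pos_aux hμ h0 rfl)
      (pr_mono_aux hμ fun ω' h' => h _ _ h')

lemma submod_sum {Ω A B C : Type} [Fintype Ω] {μ : Ω → ℝ} (hμ : IsProb μ)
    (X : Ω → A) (Y : Ω → B) (Z : Ω → C) :
    ∑ ω, μ ω * (pr μ (fun ω' => (X ω', Z ω') = (X ω, Z ω)) *
      pr μ (fun ω' => (Y ω', Z ω') = (Y ω, Z ω)) /
      (pr μ (fun ω' => (X ω', Y ω', Z ω') = (X ω, Y ω, Z ω)) *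
        pr μ (fun ω' => Z ω' = Z ω))) ≤ 1 := by
  obtain ⟨h0, h1⟩ := hμ
  set P : A → B → C → ℝ := fun a b c => pr μ (fun ω' => (X ω', Y ω', Z ω') = (a, b, c)) with hP
  set Q : C → ℝ := fun c => pr μ (fun ω' => Z ω' = c) with hQ
  have hP0 : ∀ a b c, 0 ≤ P a b c := fun a b c => pr_nonneg_aux h0 _
  have hQ0 : ∀ c, 0 ≤ Q c := fun c => pr_nonneg_aux h0 _
  calc _ = ∑ ω, ∑ u, ∑ v, (if (X u, Z u) = (X ω, Z ω) then μ u else 0) *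
          (if (Y v, Z v) = (Y ω, Z ω) then μ v else 0) *
            (μ ω / (P (X ω) (Y ω) (Z ω) * Q (Z ω))) := by
        refine Finset.sum_congr rfl fun ω _ => ?_
        simp only [← Finset.sum_mul, ← Finset.mul_sum]
        rw [sum_ite_eq_pr, sum_ite_eq_pr]
        simp only [hP, hQ]
        ring
    _ = ∑ u, ∑ v, ∑ ω, (if (X u, Z u) = (X ω, Z ω) then μ u else 0) *
          (if (Y v, Z v) = (Y ω, Z ω) then μ v else 0) *
            (μ ω / (P (X ω) (Y ω) (Z ω) * Q (Z ω))) := by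
        rw [Finset.sum_comm]
        exact Finset.sum_congr rfl fun u _ => Finset.sum_comm
    _ ≤ ∑ u, ∑ v, (if Z v = Z u then μ v else 0) * (μ u / Q (Z u)) := by
        refine Finset.sum_le_sum fun u _ => Finset.sum_le_sum fun v _ => ?_
        by_cases hz : Z v = Z u
        · rw [if_pos hz]
          have : ∀ ω, (if (X u, Z u) = (X ω, Z ω) then μ u else 0) *
              (if (Y v, Z v) = (Y ω, Z ω) then μ v else 0) *
                (μ ω / (P (X ω) (Y ω) (Z ω) * Q (Z ω))) =
              (if (X ω, Y ω, Z ω) = (X u, Y v, Z u) then μ ω else 0) *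
                (μ u * μ v / (P (X u) (Y v) (Z u) * Q (Z u))) := by
            intro ω
            by_cases hh : (X ω, Y ω, Z ω) = (X u, Y v, Z u)
            · simp only [Prod.mk.injEq] at hh
              obtain ⟨ha, hb, hc⟩ := hh
              simp only [ha, hb, hc, hz, if_true]
              ring
            · rw [if_neg hh, zero_mul]
              by_cases h2 : (X u, Z u) = (X ω, Z ω)
              · rw [if_neg (c := (Y v, Z v) = (Y ω, Z ω))]
                · ring
                · intro h3
                  simp only [Prod.mk.injEq] at h2 h3 hh
                  exact hh ⟨h2.1.symm, h3.1.symm, h2.2.symm⟩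
              · rw [if_neg h2]; ring
          rw [Finset.sum_congr rfl fun ω _ => this ω, ← Finset.sum_mul]
          rw [sum_ite_eq_pr]
          change P (X u) (Y v) (Z u) * _ ≤ _
          have e : P (X u) (Y v) (Z u) * (μ u * μ v / (P (X u) (Y v) (Z u) * Q (Z u))) =
            (P (X u) (Y v) (Z u) / P (X u) (Y v) (Z u)) * (μ v * (μ u / Q (Z u))) := by
            ring
          rw [e]
          exact mul_le_of_le_one_left
            (mul_nonneg (h0 v) (div_nonneg (h0 u) (hQ0 _))) (div_self_le_one _)
        · rw [if_neg hz, zero_mul]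
          refine le_of_eq (Finset.sum_eq_zero fun ω _ => ?_)
          by_cases h2 : (X u, Z u) = (X ω, Z ω)
          · rw [if_neg (c := (Y v, Z v) = (Y ω, Z ω))]
            · ring
            · intro h3
              simp only [Prod.mk.injEq] at h2 h3
              exact hz (h3.2.trans h2.2.symm)
          · rw [if_neg h2]; ring
    _ ≤ ∑ u, μ u := by
        refine Finset.sum_le_sum fun u _ => ?_
        rw [← Finset.sum_mul]
        change Q (Z u) * (μ u / Q (Z u)) ≤ _
        have e : Q (Z u) * (μ u / Q (Z u)) = (Q (Z u) / Q (Z u)) * μ u := by ring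
        rw [e]
        exact mul_le_of_le_one_left (h0 u) (div_self_le_one _)
    _ = 1 := h1

lemma ent_submod {Ω A B C : Type} [Fintype Ω] {μ : Ω → ℝ} (hμ : IsProb μ)
    (X : Ω → A) (Y : Ω → B) (Z : Ω → C) :
    ent μ (fun ω => (X ω, Y ω, Z ω)) + ent μ Z ≤
      ent μ (fun ω => (X ω, Z ω)) + ent μ (fun ω => (Y ω, Z ω)) := by
  have hs := submod_sum hμ X Y Z
  obtain ⟨h0, h1⟩ := hμ
  simp only [ent_eq_sum]
  have hl : 0 < Real.log 2 := Real.log_pos (by norm_num)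
  have key : ∑ ω, μ ω * (Real.logb 2 (pr μ (fun ω' => (X ω', Z ω') = (X ω, Z ω))) +
      Real.logb 2 (pr μ (fun ω' => (Y ω', Z ω') = (Y ω, Z ω))) -
      Real.logb 2 (pr μ (fun ω' => (X ω', Y ω', Z ω') = (X ω, Y ω, Z ω))) -
      Real.logb 2 (pr μ (fun ω' => Z ω' = Z ω))) ≤ 0 := by
    have : ∑ ω, μ ω * (Real.logb 2 (pr μ (fun ω' => (X ω', Z ω') = (X ω, Z ω))) +
      Real.logb 2 (pr μ (fun ω' => (Y ω', Z ω') = (Y ω, Z ω))) -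
      Real.logb 2 (pr μ (fun ω' => (X ω', Y ω', Z ω') = (X ω, Y ω, Z ω))) -
      Real.logb 2 (pr μ (fun ω' => Z ω' = Z ω))) ≤
      ∑ ω, (μ ω * (pr μ (fun ω' => (X ω', Z ω') = (X ω, Z ω)) *
      pr μ (fun ω' => (Y ω', Z ω') = (Y ω, Z ω)) /
      (pr μ (fun ω' => (X ω', Y ω', Z ω') = (X ω, Y ω, Z ω)) *
        pr μ (fun ω' => Z ω' = Z ω))) - μ ω) / Real.log 2 := by
      refine Finset.sum_le_sum fun ω _ => ?_
      by_cases hω : μ ω = 0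
      · simp [hω]
      have p1 : 0 < pr μ (fun ω' => (X ω', Z ω') = (X ω, Z ω)) := pr_pos_aux h0 hω rfl
      have p2 : 0 < pr μ (fun ω' => (Y ω', Z ω') = (Y ω, Z ω)) := pr_pos_aux h0 hω rfl
      have p3 : 0 < pr μ (fun ω' => (X ω', Y ω', Z ω') = (X ω, Y ω, Z ω)) :=
        pr_pos_aux h0 hω rfl
      have p4 : 0 < pr μ (fun ω' => Z ω' = Z ω) := pr_pos_aux h0 hω rfl
      generalize pr μ (fun ω' => (X ω', Z ω') = (X ω, Z ω)) = a at *
      generalize pr μ (fun ω' => (Y ω', Z ω') = (Y ω, Z ω)) = b at *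
      generalize pr μ (fun ω' => (X ω', Y ω', Z ω') = (X ω, Y ω, Z ω)) = c at *
      generalize pr μ (fun ω' => Z ω' = Z ω) = d at *
      have hlog := Real.log_le_sub_one_of_pos (x := a * b / (c * d)) (by positivity)
      rw [Real.log_div (by positivity) (by positivity), Real.log_mul (by positivity) (by positivity),
        Real.log_mul (by positivity) (by positivity)] at hlog
      have e : μ ω * (Real.logb 2 a + Real.logb 2 b - Real.logb 2 c - Real.logb 2 d) =
        μ ω * (Real.log a + Real.log b - (Real.log c + Real.log d)) / Real.log 2 := by
        unfold Real.logb; ring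
      rw [e]
      have := mul_le_mul_of_nonneg_left hlog (h0 ω)
      exact div_le_div_of_nonneg_right (by linarith) hl.le
    refine this.trans ?_
    rw [← Finset.sum_div, Finset.sum_sub_distrib, h1]
    exact div_nonpos_of_nonpos_of_nonneg (by linarith) hl.le
  simp only [mul_sub, mul_add, Finset.sum_sub_distrib, Finset.sum_add_distrib] at key
  linarith

/-- `H(γ|δ) ≤ H(γ|α) + H(γ|β) + I(α:β|δ)`. -/
lemma condEnt_le_aux {Ω A B C D : Type} [Fintype Ω] {μ : Ω → ℝ} (hμ : IsProb μ)
    (α : Ω → A) (β : Ω → B) (γ : Ω → C) (δ : Ω → D) :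
    condEnt μ γ δ ≤ condEnt μ γ α + condEnt μ γ β + condMutualInfo μ α β δ := by
  unfold condMutualInfo condEnt
  have s1 := ent_submod hμ α β (fun ω => (γ ω, δ ω))
  have s2 := ent_submod hμ γ δ α
  have s3 := ent_submod hμ γ δ β
  have m1 := ent_mono_aux hμ.1 (fun ω => ((α ω, β ω), δ ω))
    (fun ω => (α ω, β ω, γ ω, δ ω)) (by simp; tauto)
  have e1 := ent_congr_part μ (fun ω => (γ ω, δ ω, α ω)) (fun ω => (α ω, γ ω, δ ω))
    (by simp; tauto)
  have e2 := ent_congr_part μ (fun ω => (γ ω, δ ω, β ω)) (fun ω => (β ω, γ ω, δ ω))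
    (by simp; tauto)
  have e3 := ent_congr_part μ (fun ω => (δ ω, α ω)) (fun ω => (α ω, δ ω)) (by simp; tauto)
  have e4 := ent_congr_part μ (fun ω => (δ ω, β ω)) (fun ω => (β ω, δ ω)) (by simp; tauto)
  linarith

lemma ent_pair_of_indep {Ω A B : Type} [Fintype Ω] {μ : Ω → ℝ} (hμ : IsProb μ)
    (α : Ω → A) (β : Ω → B) (h : Indep μ α β) :
    ent μ (fun ω => (α ω, β ω)) = ent μ α + ent μ β := by
  simp only [ent_eq_sum]
  rw [← neg_add, ← Finset.sum_add_distrib]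
  congr 1
  refine Finset.sum_congr rfl fun ω _ => ?_
  by_cases hω : μ ω = 0
  · simp [hω]
  have p1 : 0 < pr μ (fun ω' => α ω' = α ω) := pr_pos_aux hμ.1 hω rfl
  have p2 : 0 < pr μ (fun ω' => β ω' = β ω) := pr_pos_aux hμ.1 hω rfl
  simp only [Prod.mk.injEq]
  rw [h, Real.logb_mul p1.ne' p2.ne', mul_add]

lemma ent_le_of_indep {Ω A B C : Type} [Fintype Ω] {μ : Ω → ℝ} (hμ : IsProb μ)
    (α : Ω → A) (β : Ω → B) (γ : Ω → C) (h : Indep μ α β) :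
    ent μ γ ≤ condEnt μ γ α + condEnt μ γ β := by
  unfold condEnt
  have s1 := ent_submod hμ α β γ
  have i := ent_pair_of_indep hμ α β h
  have m1 := ent_mono_aux hμ.1 (fun ω => (α ω, β ω))
    (fun ω => (α ω, β ω, γ ω)) (by simp; tauto)
  have e3 := ent_congr_part μ (fun ω => (γ ω, α ω)) (fun ω => (α ω, γ ω)) (by simp; tauto)
  have e4 := ent_congr_part μ (fun ω => (γ ω, β ω)) (fun ω => (β ω, γ ω)) (by simp; tauto)
  linarith

/-- The coupling of `μ` and `μ'` over a common law of `X` and `Y`. -/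
def coupling {Ω Ω' S : Type} [Fintype Ω] (μ : Ω → ℝ) (μ' : Ω' → ℝ)
    (X : Ω → S) (Y : Ω' → S) : Ω × Ω' → ℝ :=
  fun p => if Y p.2 = X p.1 then μ p.1 * μ' p.2 / pr μ (fun ω => X ω = X p.1) else 0

lemma coupling_fst {Ω Ω' S : Type} [Fintype Ω] [Fintype Ω'] {μ : Ω → ℝ} {μ' : Ω' → ℝ}
    (hμ : ∀ ω, 0 ≤ μ ω) (X : Ω → S) (Y : Ω' → S)
    (h : ∀ s, pr μ' (fun ω => Y ω = s) = pr μ (fun ω => X ω = s)) (E : Ω → Prop) :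
    pr (coupling μ μ' X Y) (fun p => E p.1) = pr μ E := by
  conv_lhs => unfold pr
  rw [Fintype.sum_prod_type]
  conv_rhs => unfold pr
  refine Finset.sum_congr rfl fun ω _ => ?_
  by_cases hE : E ω
  · simp only [hE, if_true, coupling]
    by_cases hω : μ ω = 0
    · simp [hω]
    have hp := pr_pos_aux (E := fun ω' => X ω' = X ω) hμ hω rfl
    have : ∀ x, (if Y x = X ω then μ ω * μ' x / pr μ (fun ω' => X ω' = X ω) else 0) =
        (if Y x = X ω then μ' x else 0) * (μ ω / pr μ (fun ω' => X ω' = X ω)) := by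
      intro x; split_ifs <;> ring
    rw [Finset.sum_congr rfl fun x _ => this x, ← Finset.sum_mul]
    change pr μ' (fun x => Y x = X ω) * _ = _
    rw [h]
    field_simp
  · simp [hE]

lemma coupling_snd {Ω Ω' S : Type} [Fintype Ω] [Fintype Ω'] {μ : Ω → ℝ} {μ' : Ω' → ℝ}
    (hμ' : ∀ ω, 0 ≤ μ' ω) (X : Ω → S) (Y : Ω' → S)
    (h : ∀ s, pr μ' (fun ω => Y ω = s) = pr μ (fun ω => X ω = s)) (E : Ω' → Prop) :
    pr (coupling μ μ' X Y) (fun p => E p.2) = pr μ' E := by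
  conv_lhs => unfold pr
  rw [Fintype.sum_prod_type_right]
  conv_rhs => unfold pr
  refine Finset.sum_congr rfl fun ω _ => ?_
  by_cases hE : E ω
  · simp only [hE, if_true, coupling]
    by_cases hω : μ' ω = 0
    · simp [hω]
    have hp := pr_pos_aux (E := fun ω' => Y ω' = Y ω) hμ' hω rfl
    have : ∀ x, (if Y ω = X x then μ x * μ' ω / pr μ (fun ω' => X ω' = X x) else 0) =
        (if X x = Y ω then μ x else 0) * (μ' ω / pr μ' (fun ω' => Y ω' = Y ω)) := by
      intro x
      by_cases hx : X x = Y ω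
      · rw [if_pos hx, if_pos hx.symm, hx, h]; ring
      · rw [if_neg hx, if_neg (Ne.symm hx)]; ring
    rw [Finset.sum_congr rfl fun x _ => this x, ← Finset.sum_mul]
    change pr μ (fun x => X x = Y ω) * _ = _
    rw [← h]
    field_simp
  · simp [hE]

lemma pr_true_aux {Ω : Type} [Fintype Ω] (μ : Ω → ℝ) : pr μ (fun _ => True) = ∑ ω, μ ω := by
  simp [pr]

lemma coupling_isProb {Ω Ω' S : Type} [Fintype Ω] [Fintype Ω'] {μ : Ω → ℝ} {μ' : Ω' → ℝ}
    (hμ : IsProb μ) (hμ' : IsProb μ') (X : Ω → S) (Y : Ω' → S)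
    (h : ∀ s, pr μ' (fun ω => Y ω = s) = pr μ (fun ω => X ω = s)) :
    IsProb (coupling μ μ' X Y) := by
  constructor
  · intro p
    unfold coupling
    split_ifs
    · exact div_nonneg (mul_nonneg (hμ.1 _) (hμ'.1 _)) (pr_nonneg_aux hμ.1 _)
    · exact le_rfl
  · rw [← pr_true_aux, coupling_fst hμ.1 X Y h (fun _ => True), pr_true_aux, hμ.2]

/-- Marginal as a sum of joint probabilities. -/
lemma pr_marg {Ω B : Type} [Fintype Ω] (μ : Ω → ℝ) (E : Ω → Prop) (β : Ω → B) (S : Finset B)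
    (hS : ∀ ω, β ω ∈ S) : pr μ E = ∑ b ∈ S, pr μ (fun ω => E ω ∧ β ω = b) := by
  unfold pr
  rw [Finset.sum_comm]
  refine Finset.sum_congr rfl fun ω _ => ?_
  by_cases hE : E ω
  · simp [hE, hS]
  · simp [hE]

lemma condIndepOrderAux_congr {Ω Ω' A B : Type} [iΩ : Fintype Ω] [iΩ' : Fintype Ω']
    {μ : Ω → ℝ} {μ' : Ω' → ℝ} {α : Ω → A} {β : Ω → B} {α' : Ω' → A} {β' : Ω' → B} (k : ℕ)
    (h : ∀ a b, pr μ (fun ω => α ω = a ∧ β ω = b) = pr μ' (fun ω => α' ω = a ∧ β' ω = b))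
    (ha : ∀ a, pr μ (fun ω => α ω = a) = pr μ' (fun ω => α' ω = a))
    (hb : ∀ b, pr μ (fun ω => β ω = b) = pr μ' (fun ω => β' ω = b))
    (hc : CondIndepOrderAux k Ω A B iΩ μ α β) : CondIndepOrderAux k Ω' A B iΩ' μ' α' β' := by
  cases k with
  | zero =>
    intro a b
    rw [← h, ← ha, ← hb]
    exact hc a b
  | succ k =>
    obtain ⟨Ω₁, A₁, B₁, i₁, μ₁, α₀, β₀, αs, βs, h1, h2, h3⟩ := hc
    exact ⟨Ω₁, A₁, B₁, i₁, μ₁, α₀, β₀, αs, βs, h1, fun a b => (h2 a b).trans (h a b), h3⟩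

lemma ent_le_aux (k : ℕ) : ∀ {Ω A B C : Type} [iΩ : Fintype Ω]
    (μ : Ω → ℝ) (_ : IsProb μ) (α : Ω → A) (β : Ω → B) (γ : Ω → C)
    (_ : CondIndepOrderAux k Ω A B iΩ μ α β),
    ent μ γ ≤ (2:ℝ) ^ k * condEnt μ γ α + (2:ℝ) ^ k * condEnt μ γ β := by
  induction k with
  | zero =>
    intro Ω A B C iΩ μ hμ α β γ h
    simpa using ent_le_of_indep hμ α β γ h
  | succ k ih =>
    intro Ω A B C iΩ μ hμ α β γ h
    obtain ⟨Ω', A', B', iΩ', μ', α₀, β₀, αs, βs, hμ', hlaw, hca, hcb, hrec⟩ := h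
    have hl : ∀ s, pr μ' (fun ω => (α₀ ω, β₀ ω) = s) = pr μ (fun ω => (α ω, β ω) = s) := by
      rintro ⟨a, b⟩
      simpa only [Prod.mk.injEq] using hlaw a b
    set ν := coupling μ μ' (fun ω => (α ω, β ω)) (fun ω => (α₀ ω, β₀ ω)) with hν
    have hνp : IsProb ν := coupling_isProb hμ hμ' _ _ hl
    have f1 : ∀ E : Ω → Prop, pr ν (fun p => E p.1) = pr μ E := coupling_fst hμ.1 _ _ hl
    have f2 : ∀ E : Ω' → Prop, pr ν (fun p => E p.2) = pr μ' E := coupling_snd hμ'.1 _ _ hl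
    have hae : ∀ p, ν p ≠ 0 → α₀ p.2 = α p.1 ∧ β₀ p.2 = β p.1 := by
      intro p hp
      by_contra hne
      apply hp
      simp only [hν, coupling, Prod.mk.injEq]
      rw [if_neg hne]
    have g1 : ∀ {D : Type} (X : Ω → D), ent ν (fun p => X p.1) = ent μ X := fun X =>
      ent_congr_law _ _ _ _ fun a => f1 (fun ω => X ω = a)
    have g2 : ∀ {D : Type} (X : Ω' → D), ent ν (fun p => X p.2) = ent μ' X := fun X =>
      ent_congr_law _ _ _ _ fun a => f2 (fun ω => X ω = a)
    have g3 : ∀ {D : Type} (X Y : Ω × Ω' → D), (∀ p, ν p ≠ 0 → X p = Y p) → ent ν X = ent ν Y :=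
      fun X Y hXY => ent_congr_law _ _ _ _ fun a => pr_congr_ae fun p hp => by rw [hXY p hp]
    have hc := condIndepOrderAux_congr (μ' := ν) (α' := fun p => αs p.2) (β' := fun p => βs p.2) k
      (fun a b => (f2 (fun ω => αs ω = a ∧ βs ω = b)).symm)
      (fun a => (f2 (fun ω => αs ω = a)).symm) (fun b => (f2 (fun ω => βs ω = b)).symm) hrec
    have hih := ih ν hνp _ _ (fun p => γ p.1) hc
    have c1 := condEnt_le_aux hνp (fun p => α₀ p.2) (fun p => β₀ p.2) (fun p => γ p.1)
      (fun p => αs p.2)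
    have c2 := condEnt_le_aux hνp (fun p => α₀ p.2) (fun p => β₀ p.2) (fun p => γ p.1)
      (fun p => βs p.2)
    have z : ∀ {D : Type} (δ : Ω' → D), condMutualInfo ν (fun p => α₀ p.2) (fun p => β₀ p.2)
        (fun p => δ p.2) = condMutualInfo μ' α₀ β₀ δ := by
      intro D δ
      unfold condMutualInfo condEnt
      rw [g2 δ, g2 (fun ω => (α₀ ω, δ ω)), g2 (fun ω => (β₀ ω, δ ω)),
        g2 (fun ω => ((α₀ ω, β₀ ω), δ ω))]
    have ka : condEnt ν (fun p => γ p.1) (fun p => α₀ p.2) = condEnt μ γ α := by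
      unfold condEnt
      rw [g3 (fun p => α₀ p.2) (fun p => α p.1) fun p hp => (hae p hp).1,
        g3 (fun p => (γ p.1, α₀ p.2)) (fun p => (γ p.1, α p.1)) fun p hp => by rw [(hae p hp).1],
        g1 α, g1 (fun ω => (γ ω, α ω))]
    have kb : condEnt ν (fun p => γ p.1) (fun p => β₀ p.2) = condEnt μ γ β := by
      unfold condEnt
      rw [g3 (fun p => β₀ p.2) (fun p => β p.1) fun p hp => (hae p hp).2,
        g3 (fun p => (γ p.1, β₀ p.2)) (fun p => (γ p.1, β p.1)) fun p hp => by rw [(hae p hp).2],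
        g1 β, g1 (fun ω => (γ ω, β ω))]
    rw [z, hca, ka, kb] at c1
    rw [z, hcb, ka, kb] at c2
    rw [g1 γ] at hih
    have h2 : (0:ℝ) ≤ 2 ^ k := by positivity
    have d1 := mul_le_mul_of_nonneg_left c1 h2
    have d2 := mul_le_mul_of_nonneg_left c2 h2
    rw [pow_succ]
    linarith

end

/-- If random variables `α` and `β` on a finite probability space are
conditionally independent of order `k`, and `γ` is an arbitrary random variable on
the same probability space, then `H(γ) ≤ 2^k·H(γ|α) + 2^k·H(γ|β)`. -/
theorem ent_le_of_condIndepOrder {Ω A B C : Type} [Fintype Ω]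
    (μ : Ω → ℝ) (hμ : IsProb μ) (α : Ω → A) (β : Ω → B) (γ : Ω → C) (k : ℕ)
    (h : CondIndepOrder μ α β k) :
    ent μ γ ≤ (2:ℝ) ^ k * condEnt μ γ α + (2:ℝ) ^ k * condEnt μ γ β := by
  exact ent_le_aux k μ hμ α β γ h
end

section
/- A pair of random variables α, β on a finite probability space is conditionally independent (of some finite order) if and only if their joint probability matrix is not a block matrix. -/
open scoped BigOperators Classical

section PartOne
variable {Ω A B C : Type} [Fintype Ω]

theorem pr_nonneg {μ : Ω → ℝ} (h : ∀ ω, 0 ≤ μ ω) (E : Ω → Prop) : 0 ≤ pr μ E := by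
  unfold pr
  apply Finset.sum_nonneg
  intro ω _
  split_ifs
  · exact h ω
  · exact le_refl _

theorem pr_pos_iff {μ : Ω → ℝ} (h : ∀ ω, 0 ≤ μ ω) (E : Ω → Prop) :
    0 < pr μ E ↔ ∃ ω, E ω ∧ 0 < μ ω := by
  unfold pr
  rw [Finset.sum_pos_iff_of_nonneg]
  · constructor
    · rintro ⟨ω, _, hω⟩
      by_cases hE : E ω
      · exact ⟨ω, hE, by simpa [hE] using hω⟩
      · simp [hE] at hω
    · rintro ⟨ω, hE, hω⟩
      exact ⟨ω, Finset.mem_univ _, by simpa [hE] using hω⟩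
  · intro ω _
    split_ifs
    · exact h ω
    · exact le_refl _

theorem ent_eq (μ : Ω → ℝ) (X : Ω → A) :
    ent μ X = -∑ ω, μ ω * Real.logb 2 (pr μ (fun ω' => X ω' = X ω)) := by
  unfold ent
  congr 1
  rw [← Finset.sum_fiberwise_of_maps_to (s := Finset.univ) (t := Finset.univ.image X) (g := X)
    (fun ω _ => Finset.mem_image_of_mem X (Finset.mem_univ ω))]
  apply Finset.sum_congr rfl
  intro a _
  conv_lhs => rw [pr, Finset.sum_mul]
  rw [Finset.sum_filter]
  apply Finset.sum_congr rfl
  intro ω _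
  by_cases h : X ω = a
  · simp [h, pr]
  · simp [h, pr]

theorem cmi_eq (μ : Ω → ℝ) (α : Ω → A) (β : Ω → B) (γ : Ω → C) :
    condMutualInfo μ α β γ = ∑ ω, μ ω *
      (Real.logb 2 (pr μ (fun ω' => ((α ω', β ω'), γ ω') = ((α ω, β ω), γ ω)))
        + Real.logb 2 (pr μ (fun ω' => γ ω' = γ ω))
        - Real.logb 2 (pr μ (fun ω' => (α ω', γ ω') = (α ω, γ ω)))
        - Real.logb 2 (pr μ (fun ω' => (β ω', γ ω') = (β ω, γ ω)))) := by
  unfold condMutualInfo condEnt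
  simp only [ent_eq, mul_add, mul_sub, Finset.sum_add_distrib, Finset.sum_sub_distrib]
  ring

/-- conditional independence implies vanishing conditional mutual information -/
theorem cmi_zero_of (μ : Ω → ℝ) (h0 : ∀ ω, 0 ≤ μ ω) (α : Ω → A) (β : Ω → B) (γ : Ω → C)
    (h : ∀ a b c, pr μ (fun ω' => ((α ω', β ω'), γ ω') = ((a, b), c)) * pr μ (fun ω' => γ ω' = c)
      = pr μ (fun ω' => (α ω', γ ω') = (a, c)) * pr μ (fun ω' => (β ω', γ ω') = (b, c))) :
    condMutualInfo μ α β γ = 0 := by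
  rw [cmi_eq]
  apply Finset.sum_eq_zero
  intro ω _
  rcases (h0 ω).eq_or_lt with h1 | h1
  · rw [← h1, zero_mul]
  · have e := h (α ω) (β ω) (γ ω)
    have p1 := (pr_pos_iff h0 (fun ω' => ((α ω', β ω'), γ ω') = ((α ω, β ω), γ ω))).2 ⟨ω, rfl, h1⟩
    have p2 := (pr_pos_iff h0 (fun ω' => γ ω' = γ ω)).2 ⟨ω, rfl, h1⟩
    have p3 := (pr_pos_iff h0 (fun ω' => (α ω', γ ω') = (α ω, γ ω))).2 ⟨ω, rfl, h1⟩
    have p4 := (pr_pos_iff h0 (fun ω' => (β ω', γ ω') = (β ω, γ ω))).2 ⟨ω, rfl, h1⟩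
    rw [← Real.logb_mul p1.ne' p2.ne', e, Real.logb_mul p3.ne' p4.ne']
    ring

/-- a sum of `μ` over an event, times a factor -/
theorem pr_mul (μ : Ω → ℝ) (E : Ω → Prop) (c : ℝ) :
    pr μ E * c = ∑ ω, if E ω then μ ω * c else 0 := by
  rw [pr, Finset.sum_mul]
  apply Finset.sum_congr rfl
  intro ω _
  split_ifs <;> simp

/-- vanishing conditional mutual information: supports are conditionally rectangular -/
theorem supp_of_cmi_zero (μ : Ω → ℝ) (hμ : IsProb μ) (α : Ω → A) (β : Ω → B) (γ : Ω → C)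
    (h : condMutualInfo μ α β γ = 0) (ω₁ ω₂ : Ω) (h1 : 0 < μ ω₁) (h2 : 0 < μ ω₂)
    (hγ : γ ω₁ = γ ω₂) :
    ∃ ω, 0 < μ ω ∧ α ω = α ω₁ ∧ β ω = β ω₂ := by
  by_contra hno
  push Not at hno
  have h0 := hμ.1
  set p3 : Ω → Ω → ℝ := fun a b =>
    pr μ (fun ω' => ((α ω', β ω'), γ ω') = ((α a, β b), γ a)) with hp3
  set pc : Ω → ℝ := fun a => pr μ (fun ω' => γ ω' = γ a) with hpc
  set pa : Ω → ℝ := fun a => pr μ (fun ω' => (α ω', γ ω') = (α a, γ a)) with hpa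
  set pb : Ω → ℝ := fun a => pr μ (fun ω' => (β ω', γ ω') = (β a, γ a)) with hpb
  -- step one: total ratio is at least one
  have s1 : 1 ≤ ∑ ω, μ ω * (pa ω * pb ω / (p3 ω ω * pc ω)) := by
    rw [cmi_eq] at h
    have key : ∀ ω, μ ω * (1 - pa ω * pb ω / (p3 ω ω * pc ω)) ≤ Real.log 2 * (μ ω *
      (Real.logb 2 (p3 ω ω) + Real.logb 2 (pc ω) - Real.logb 2 (pa ω) - Real.logb 2 (pb ω))) := by
      intro ω
      rcases (h0 ω).eq_or_lt with hw | hw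
      · rw [← hw]; simp
      · have q1 : 0 < p3 ω ω := (pr_pos_iff h0 _).2 ⟨ω, rfl, hw⟩
        have q2 : 0 < pc ω := (pr_pos_iff h0 _).2 ⟨ω, rfl, hw⟩
        have q3 : 0 < pa ω := (pr_pos_iff h0 _).2 ⟨ω, rfl, hw⟩
        have q4 : 0 < pb ω := (pr_pos_iff h0 _).2 ⟨ω, rfl, hw⟩
        have l2 : 0 < Real.log 2 := Real.log_pos (by norm_num)
        have e : Real.log 2 * (μ ω *
            (Real.logb 2 (p3 ω ω) + Real.logb 2 (pc ω) - Real.logb 2 (pa ω)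
              - Real.logb 2 (pb ω))) = μ ω * (-Real.log (pa ω * pb ω / (p3 ω ω * pc ω))) := by
          rw [Real.log_div (by positivity) (by positivity), Real.log_mul q3.ne' q4.ne',
            Real.log_mul q1.ne' q2.ne']
          unfold Real.logb
          field_simp
          ring
        rw [e]
        apply mul_le_mul_of_nonneg_left _ hw.le
        have := Real.log_le_sub_one_of_pos (x := pa ω * pb ω / (p3 ω ω * pc ω)) (by positivity)
        linarith
    have := Finset.sum_le_sum (s := Finset.univ) (fun ω _ => key ω)
    rw [← Finset.mul_sum] at this
    change _ ≤ Real.log 2 * _ at this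
    rw [h, mul_zero] at this
    simp only [mul_sub, mul_one, Finset.sum_sub_distrib] at this
    rw [hμ.2] at this
    linarith
  -- step two: reorganize
  have s2 : ∑ ω, μ ω * (pa ω * pb ω / (p3 ω ω * pc ω)) =
      ∑ a, ∑ b, if γ b = γ a then μ a * μ b / pc a * (p3 a b / p3 a b) else 0 := by
    have e1 : ∀ ω, μ ω * (pa ω * pb ω / (p3 ω ω * pc ω)) = ∑ a, ∑ b,
        if (γ b = γ a ∧ ((α ω, β ω), γ ω) = ((α a, β b), γ a)) then
          μ a * μ b / pc a * (μ ω / p3 a b) else 0 := by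
      intro ω
      have : μ ω * (pa ω * pb ω / (p3 ω ω * pc ω)) = pa ω * (pb ω * (μ ω / (p3 ω ω * pc ω))) := by
        ring
      rw [this]
      rw [show pa ω = pr μ (fun ω' => (α ω', γ ω') = (α ω, γ ω)) from rfl, pr_mul]
      apply Finset.sum_congr rfl
      intro a _
      rw [show pb ω = pr μ (fun ω' => (β ω', γ ω') = (β ω, γ ω)) from rfl, pr_mul]
      by_cases ha : (α a, γ a) = (α ω, γ ω)
      · rw [if_pos ha, Finset.mul_sum]
        apply Finset.sum_congr rfl
        intro b _
        simp only [Prod.mk.injEq] at ha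
        by_cases hb : (β b, γ b) = (β ω, γ ω)
        · simp only [Prod.mk.injEq] at hb
          rw [if_pos (by simp [hb]), if_pos (by simp [ha, hb])]
          have e3 : p3 a b = p3 ω ω := by simp only [hp3, ha, hb]
          have e4 : pc a = pc ω := by simp only [hpc, ha]
          rw [e3, e4]
          ring
        · rw [if_neg hb, if_neg, mul_zero]
          simp only [Prod.mk.injEq] at hb ⊢
          rintro ⟨x, ⟨_, y⟩, z⟩
          exact hb ⟨y.symm, by rw [x, z]⟩
      · rw [if_neg ha]
        symm
        apply Finset.sum_eq_zero
        intro b _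
        rw [if_neg]
        simp only [Prod.mk.injEq] at ha ⊢
        rintro ⟨_, ⟨x, _⟩, z⟩
        exact ha ⟨x.symm, z.symm⟩
    simp only [e1]
    rw [Finset.sum_comm]
    apply Finset.sum_congr rfl
    intro a _
    rw [Finset.sum_comm]
    apply Finset.sum_congr rfl
    intro b _
    by_cases hb : γ b = γ a
    · simp only [hb, true_and, if_true]
      have : μ a * μ b / pc a * (p3 a b / p3 a b) = p3 a b * (μ a * μ b / pc a / p3 a b) := by ring
      rw [this]
      rw [show p3 a b = pr μ (fun ω' => ((α ω', β ω'), γ ω') = ((α a, β b), γ a)) from rfl, pr_mul]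
      apply Finset.sum_congr rfl
      intro ω _
      split_ifs
      · ring
      · rfl
    · simp [hb]
  have s3 : ∑ a, ∑ b, (if γ b = γ a then μ a * μ b / pc a else 0) = 1 := by
    rw [← hμ.2]
    apply Finset.sum_congr rfl
    intro a _
    have : ∑ b, (if γ b = γ a then μ a * μ b / pc a else 0) = pc a * (μ a / pc a) := by
      rw [show pc a = pr μ (fun ω' => γ ω' = γ a) from rfl, pr_mul]
      apply Finset.sum_congr rfl
      intro ω _
      split_ifs
      · ring
      · rfl
    rw [this]
    rcases (h0 a).eq_or_lt with hw | hw
    · rw [← hw]; simp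
    · have q2 : 0 < pc a := (pr_pos_iff h0 _).2 ⟨a, rfl, hw⟩
      field_simp
  have s4 : ∑ a, ∑ b, (if γ b = γ a then μ a * μ b / pc a * (p3 a b / p3 a b) else 0) <
      ∑ a, ∑ b, (if γ b = γ a then μ a * μ b / pc a else 0) := by
    have le : ∀ a b, (if γ b = γ a then μ a * μ b / pc a * (p3 a b / p3 a b) else 0) ≤
        (if γ b = γ a then μ a * μ b / pc a else 0) := by
      intro a b
      split_ifs
      · have q : 0 ≤ μ a * μ b / pc a :=
          div_nonneg (mul_nonneg (h0 a) (h0 b)) (pr_nonneg h0 _)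
        exact mul_le_of_le_one_right q (div_self_le_one _)
      · exact le_refl _
    apply Finset.sum_lt_sum
    · intro a _
      exact Finset.sum_le_sum (fun b _ => le a b)
    · refine ⟨ω₁, Finset.mem_univ _, ?_⟩
      apply Finset.sum_lt_sum
      · intro b _
        exact le ω₁ b
      · refine ⟨ω₂, Finset.mem_univ _, ?_⟩
        rw [if_pos hγ.symm, if_pos hγ.symm]
        have z : p3 ω₁ ω₂ = 0 := by
          by_contra hne
          have : 0 < p3 ω₁ ω₂ := lt_of_le_of_ne (pr_nonneg h0 _) (Ne.symm hne)
          obtain ⟨ω, hω, hp⟩ := (pr_pos_iff h0 _).1 this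
          simp only [Prod.mk.injEq] at hω
          exact hno ω hp hω.1.1 hω.1.2
        have q2 : 0 < pc ω₁ := (pr_pos_iff h0 _).2 ⟨ω₁, rfl, h1⟩
        rw [z]
        simp only [div_zero, mul_zero]
        positivity
  linarith

/-- pairs with a common nontrivial two-valued function are not conditionally independent -/
theorem not_condIndep (k : ℕ) : ∀ (Ω A B : Type) (iΩ : Fintype Ω) (μ : Ω → ℝ) (α : Ω → A)
    (β : Ω → B) (P : A → Prop) (Q : B → Prop), @IsProb _ iΩ μ →
    (∀ ω, 0 < μ ω → (P (α ω) ↔ Q (β ω))) → (∃ ω, 0 < μ ω ∧ P (α ω)) →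
    (∃ ω, 0 < μ ω ∧ ¬ P (α ω)) → ¬ CondIndepOrderAux k Ω A B iΩ μ α β := by
  induction k with
  | zero =>
    intro Ω A B iΩ μ α β P Q hμ hPQ ⟨ω₁, h1, h1'⟩ ⟨ω₂, h2, h2'⟩ hc
    have hc' : Indep μ α β := hc
    have e := hc' (α ω₁) (β ω₂)
    have q1 := (pr_pos_iff hμ.1 (fun ω => α ω = α ω₁)).2 ⟨ω₁, rfl, h1⟩
    have q2 := (pr_pos_iff hμ.1 (fun ω => β ω = β ω₂)).2 ⟨ω₂, rfl, h2⟩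
    have q3 := mul_pos q1 q2
    rw [← e] at q3
    obtain ⟨ω, ⟨ha, hb⟩, hp⟩ := (pr_pos_iff hμ.1 _).1 q3
    have := hPQ ω hp
    rw [ha, hb, ← hPQ ω₂ h2] at this
    exact h2' (this.1 h1')
  | succ k ih =>
    intro Ω A B iΩ μ α β P Q hμ hPQ ⟨ω₁, h1, h1'⟩ ⟨ω₂, h2, h2'⟩ hc
    obtain ⟨Ω', A', B', iΩ', μ', α₀, β₀, αs, βs, hμ', hd, hA, hB, hc'⟩ := hc
    have up : ∀ ω, 0 < μ ω → ∃ ω', 0 < μ' ω' ∧ α₀ ω' = α ω ∧ β₀ ω' = β ω := by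
      intro ω hω
      have q := (pr_pos_iff hμ.1 (fun w => α w = α ω ∧ β w = β ω)).2 ⟨ω, ⟨rfl, rfl⟩, hω⟩
      rw [← hd] at q
      obtain ⟨ω', h, h'⟩ := (pr_pos_iff hμ'.1 _).1 q
      exact ⟨ω', h', h⟩
    have hPQ' : ∀ ω', 0 < μ' ω' → (P (α₀ ω') ↔ Q (β₀ ω')) := by
      intro ω' hω
      have q := (pr_pos_iff hμ'.1 (fun w => α₀ w = α₀ ω' ∧ β₀ w = β₀ ω')).2 ⟨ω', ⟨rfl, rfl⟩, hω⟩
      rw [hd] at q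
      obtain ⟨ω, ⟨ha, hb⟩, h'⟩ := (pr_pos_iff hμ.1 _).1 q
      rw [← ha, ← hb]
      exact hPQ ω h'
    have tr : ∀ {D : Type} (γ : Ω' → D), condMutualInfo μ' α₀ β₀ γ = 0 → ∀ w, 0 < μ' w →
        ((∃ w', 0 < μ' w' ∧ γ w' = γ w ∧ P (α₀ w')) ↔ P (α₀ w)) := by
      intro D γ hγ w hw
      constructor
      · rintro ⟨w', hw', e, hP⟩
        obtain ⟨v, hv, va, vb⟩ := supp_of_cmi_zero μ' hμ' α₀ β₀ γ hγ w' w hw' hw e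
        rw [hPQ' w hw, ← vb, ← hPQ' v hv, va]
        exact hP
      · intro hP
        exact ⟨w, hw, rfl, hP⟩
    refine ih Ω' A' B' iΩ' μ' αs βs (fun s => ∃ w', 0 < μ' w' ∧ αs w' = s ∧ P (α₀ w'))
      (fun s => ∃ w', 0 < μ' w' ∧ βs w' = s ∧ P (α₀ w')) hμ' ?_ ?_ ?_ hc'
    · intro w hw
      exact (tr αs hA w hw).trans (tr βs hB w hw).symm
    · obtain ⟨w, hw, wa, wb⟩ := up ω₁ h1
      refine ⟨w, hw, (tr αs hA w hw).2 ?_⟩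
      rw [wa]; exact h1'
    · obtain ⟨w, hw, wa, wb⟩ := up ω₂ h2
      refine ⟨w, hw, fun hh => h2' ?_⟩
      rw [← wa]; exact (tr αs hA w hw).1 hh

end PartOne

section PartTwo

theorem pr_total {Ω B : Type} [Fintype Ω] [Fintype B] (μ : Ω → ℝ) (E : Ω → Prop) (β : Ω → B) :
    pr μ E = ∑ b, pr μ (fun ω => E ω ∧ β ω = b) := by
  unfold pr
  rw [Finset.sum_comm]
  apply Finset.sum_congr rfl
  intro ω _
  by_cases h : E ω
  · simp [h]
  · simp [h]

theorem pr_congr {Ω : Type} [Fintype Ω] (μ : Ω → ℝ) {E E' : Ω → Prop} (h : ∀ ω, E ω ↔ E' ω) :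
    pr μ E = pr μ E' := by
  have : E = E' := funext fun ω => propext (h ω)
  rw [this]

theorem cmi_zero_of_prod {Ω A B C : Type} [Fintype Ω] [Fintype A] [Fintype B] (μ : Ω → ℝ)
    (h0 : ∀ ω, 0 ≤ μ ω) (α : Ω → A) (β : Ω → B) (γ : Ω → C) (u : C → A → ℝ) (v : C → B → ℝ)
    (h : ∀ a b c, pr μ (fun ω => (γ ω = c ∧ α ω = a) ∧ β ω = b) = u c a * v c b) :
    condMutualInfo μ α β γ = 0 := by
  apply cmi_zero_of μ h0
  intro a b c
  have e1 : pr μ (fun ω' => ((α ω', β ω'), γ ω') = ((a, b), c)) = u c a * v c b := by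
    rw [← h]; apply pr_congr; intro ω; simp only [Prod.mk.injEq]; tauto
  have e2 : ∀ a, pr μ (fun ω' => (α ω', γ ω') = (a, c)) = u c a * ∑ b, v c b := by
    intro a
    rw [pr_total μ _ β, Finset.mul_sum]
    apply Finset.sum_congr rfl
    intro b _
    rw [← h]; apply pr_congr; intro ω; simp only [Prod.mk.injEq]; tauto
  have e3 : pr μ (fun ω' => (β ω', γ ω') = (b, c)) = (∑ a, u c a) * v c b := by
    rw [pr_total μ _ α, Finset.sum_mul]
    apply Finset.sum_congr rfl
    intro b _
    rw [← h]; apply pr_congr; intro ω; simp only [Prod.mk.injEq]; tauto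
  have e4 : pr μ (fun ω' => γ ω' = c) = (∑ a, u c a) * ∑ b, v c b := by
    rw [pr_total μ _ α, Finset.sum_mul]
    apply Finset.sum_congr rfl
    intro b _
    rw [← e2]; apply pr_congr; intro ω; simp only [Prod.mk.injEq]; tauto
  rw [e1, e2, e3, e4]
  ring

theorem aux_transfer (k : ℕ) {Ω Ω' A B : Type} [iΩ : Fintype Ω] [iΩ' : Fintype Ω'] [Fintype A]
    [Fintype B] (μ : Ω → ℝ) (α : Ω → A) (β : Ω → B) (μ' : Ω' → ℝ) (α' : Ω' → A) (β' : Ω' → B)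
    (h : ∀ a b, pr μ (fun ω => α ω = a ∧ β ω = b) = pr μ' (fun ω => α' ω = a ∧ β' ω = b))
    (hc : CondIndepOrderAux k Ω A B iΩ μ α β) : CondIndepOrderAux k Ω' A B iΩ' μ' α' β' := by
  cases k with
  | zero =>
    have hc' : Indep μ α β := hc
    show Indep μ' α' β'
    intro a b
    rw [← h, hc' a b, pr_total μ _ β, pr_total μ _ α, pr_total μ' _ β', pr_total μ' _ α']
    congr 1
    · exact Finset.sum_congr rfl fun b _ => h a b
    · apply Finset.sum_congr rfl
      intro a _
      rw [pr_congr μ (fun ω => and_comm), h, pr_congr μ' (fun ω => and_comm)]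
  | succ k =>
    obtain ⟨Ω'', A', B', iΩ'', μ'', α₀, β₀, αs, βs, hμ', hd, hA, hB, hc'⟩ := hc
    exact ⟨Ω'', A', B', iΩ'', μ'', α₀, β₀, αs, βs, hμ', fun a b => (hd a b).trans (h a b),
      hA, hB, hc'⟩

/-- conditional independence of order `k` for a matrix -/
def GoodM (k : ℕ) {A B : Type} [Fintype A] [Fintype B] (M : A → B → ℝ) : Prop :=
  CondIndepOrderAux k (A × B) A B inferInstance (fun p => M p.1 p.2) Prod.fst Prod.snd

theorem pr_pair {A B : Type} [Fintype A] [Fintype B] (M : A → B → ℝ) (a : A) (b : B) :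
    pr (fun p : A × B => M p.1 p.2) (fun p => p.1 = a ∧ p.2 = b) = M a b := by
  unfold pr
  rw [Finset.sum_eq_single (a, b)]
  · simp
  · rintro ⟨x, y⟩ _ h
    rw [if_neg]
    simpa using h
  · simp

theorem pr_quad {A B S T : Type} [Fintype A] [Fintype B] [Fintype S] [Fintype T]
    (F : A → B → S → T → ℝ) (E : (A × B) × (S × T) → Prop) :
    pr (fun p : (A × B) × (S × T) => F p.1.1 p.1.2 p.2.1 p.2.2) E =
      ∑ a, ∑ b, ∑ s, ∑ t, if E ((a, b), (s, t)) then F a b s t else 0 := by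
  simp only [pr, Fintype.sum_prod_type]

theorem ite_split (p q : Prop) [Decidable (p ∧ q)] [Decidable p] [Decidable q] (x : ℝ) :
    (if p ∧ q then x else 0) = if p then (if q then x else 0) else 0 := by
  by_cases hp : p <;> by_cases hq : q <;> simp [hp, hq]

/-- the main reduction step -/
theorem good_step (k : ℕ) {A B S T : Type} [Fintype A] [Fintype B] [Fintype S] [Fintype T]
    (M : A → B → ℝ) (C : S → T → ℝ) (F : A → B → S → T → ℝ)
    (h0 : ∀ a b s t, 0 ≤ F a b s t) (hsum : ∑ a, ∑ b, M a b = 1)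
    (hM : ∀ a b, ∑ s, ∑ t, F a b s t = M a b)
    (hC : ∀ s t, ∑ a, ∑ b, F a b s t = C s t)
    (u : S → A → ℝ) (v : S → B → ℝ) (hS : ∀ a b s, ∑ t, F a b s t = u s a * v s b)
    (u' : T → A → ℝ) (v' : T → B → ℝ) (hT : ∀ a b t, ∑ s, F a b s t = u' t a * v' t b)
    (hg : GoodM k C) : GoodM (k + 1) M := by
  refine ⟨(A × B) × (S × T), S, T, inferInstance, fun p => F p.1.1 p.1.2 p.2.1 p.2.2,
    fun p => p.1.1, fun p => p.1.2, fun p => p.2.1, fun p => p.2.2, ⟨?_, ?_⟩, ?_, ?_, ?_, ?_⟩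
  · intro p; exact h0 _ _ _ _
  · simp only [Fintype.sum_prod_type, hM, hsum]
  · intro a b
    rw [pr_pair, pr_quad, ← hM]
    simp only [ite_split, Finset.sum_ite_irrel, Finset.sum_const_zero, Finset.sum_ite_eq',
      Finset.mem_univ, if_true]
  · apply cmi_zero_of_prod _ (fun p => h0 _ _ _ _) _ _ _ u v
    intro a b s
    rw [pr_quad, ← hS]
    simp only [ite_split, Finset.sum_ite_irrel, Finset.sum_const_zero, Finset.sum_ite_eq',
      Finset.mem_univ, if_true]
  · apply cmi_zero_of_prod _ (fun p => h0 _ _ _ _) _ _ _ u' v'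
    intro a b s
    rw [pr_quad, ← hT]
    simp only [ite_split, Finset.sum_ite_irrel, Finset.sum_const_zero, Finset.sum_ite_eq',
      Finset.mem_univ, if_true]
  · refine aux_transfer k _ _ _ _ _ _ ?_ hg
    intro s t
    rw [pr_pair, pr_quad, ← hC]
    simp only [ite_split, Finset.sum_ite_irrel, Finset.sum_const_zero, Finset.sum_ite_eq',
      Finset.mem_univ, if_true]

end PartTwo

section PartThree

theorem exists_small {ι : Type} [Finite ι] (f g : ι → ℝ) :
    ∃ ε : ℝ, 0 < ε ∧ ε < 1 ∧ ∀ i, 0 < f i → ε * g i < f i := by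
  have h1 : ∀ᶠ ε : ℝ in nhdsWithin 0 (Set.Ioi 0), ∀ i, 0 < f i → ε * g i < f i := by
    rw [Filter.eventually_all]
    intro i
    by_cases h : 0 < f i
    · have : Filter.Tendsto (fun ε : ℝ => ε * g i) (nhdsWithin 0 (Set.Ioi 0)) (nhds 0) := by
        have : Filter.Tendsto (fun ε : ℝ => ε * g i) (nhds 0) (nhds (0 * g i)) :=
          (continuous_id.mul continuous_const).tendsto 0
        rw [zero_mul] at this
        exact this.mono_left nhdsWithin_le_nhds
      filter_upwards [this.eventually (gt_mem_nhds h)] with ε hε _ using hε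
    · exact Filter.Eventually.of_forall fun _ hh => absurd hh h
  have h2 : ∀ᶠ ε : ℝ in nhdsWithin 0 (Set.Ioi 0), ε ∈ Set.Ioo (0 : ℝ) 1 :=
    Ioo_mem_nhdsGT one_pos
  obtain ⟨ε, ha, hb⟩ := (h1.and h2).exists
  exact ⟨ε, hb.1, hb.2, ha⟩

/-- Kronecker delta -/
noncomputable def kd {A : Type} (x y : A) : ℝ := if x = y then 1 else 0

theorem kd_self {A : Type} (x : A) : kd x x = 1 := by simp [kd]
theorem kd_ne {A : Type} {x y : A} (h : x ≠ y) : kd x y = 0 := by simp [kd, h]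
theorem kd_comm {A : Type} (x y : A) : kd x y = kd y x := by simp [kd, eq_comm]
theorem kd_nonneg {A : Type} (x y : A) : 0 ≤ kd x y := by unfold kd; split_ifs <;> norm_num

theorem sum_kd {A : Type} [Fintype A] (f : A → ℝ) (x : A) : ∑ y, f y * kd y x = f x := by
  simp [kd]

theorem sum_kd1 {A : Type} [Fintype A] (x : A) : ∑ y, kd y x = 1 := by
  simp [kd]

/-- with probability `1 - ε` equal, otherwise independent -/
noncomputable def Emat {A : Type} (w : A → ℝ) (ε : ℝ) (s t : A) : ℝ :=
  (1 - ε) * w s * kd s t + ε * w s * w t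

noncomputable def Kmat {A : Type} (w : A → ℝ) (δ : ℝ) (s x : A) : ℝ :=
  (1 - δ) * kd s x + δ * w x

noncomputable def Fmat {A : Type} (w : A → ℝ) (δ κ : ℝ) (x y s t : A) : ℝ :=
  (1 - δ) ^ 2 * w x * kd y x * kd s x * kd t x
    + δ * (1 - δ) * w x * w y * (kd s x * kd t y + kd s y * kd t x)
    + δ ^ 2 * w x * w y * w s * w t
    + κ * w x * kd y x * (kd s x * w t + w s * kd t x - kd s x * kd t x - w s * w t)

theorem Fmat_symm {A : Type} (w : A → ℝ) (δ κ : ℝ) (x y s t : A) :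
    Fmat w δ κ x y s t = Fmat w δ κ x y t s := by
  unfold Fmat; ring

theorem Fmat_nonneg {A : Type} (w : A → ℝ) (δ κ : ℝ) (x y s t : A) (hw : ∀ a, 0 ≤ w a)
    (hδ0 : 0 ≤ δ) (hδ1 : δ ≤ 1) (hκ0 : 0 ≤ κ) (hκ1 : κ ≤ (1 - δ) ^ 2)
    (hκ2 : ∀ x, κ * w x ≤ δ ^ 2 * (w x) ^ 2) : 0 ≤ Fmat w δ κ x y s t := by
  have a1 := hw x
  have a2 := hw y
  have a3 := hw s
  have a4 := hw t
  have b1 := kd_nonneg s x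
  have b2 := kd_nonneg t x
  have b3 := kd_nonneg s y
  have b4 := kd_nonneg t y
  have c : 0 ≤ 1 - δ := by linarith
  by_cases h : y = x
  · subst h
    have e : Fmat w δ κ y y s t = ((1 - δ) ^ 2 - κ) * w y * kd s y * kd t y
      + δ * (1 - δ) * w y * w y * (kd s y * kd t y + kd s y * kd t y)
      + (δ ^ 2 * (w y) ^ 2 - κ * w y) * (w s * w t)
      + κ * w y * (kd s y * w t + w s * kd t y) := by
      unfold Fmat
      rw [kd_self]
      ring
    rw [e]
    have d1 : 0 ≤ (1 - δ) ^ 2 - κ := by linarith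
    have d2 : 0 ≤ δ ^ 2 * (w y) ^ 2 - κ * w y := by linarith [hκ2 y]
    positivity
  · unfold Fmat
    rw [kd_ne h]
    have : 0 ≤ δ * (1 - δ) * w x * w y * (kd s x * kd t y + kd s y * kd t x)
      + δ ^ 2 * w x * w y * w s * w t := by positivity
    linarith

theorem Fmat_sum_t {A : Type} [Fintype A] (w : A → ℝ) (hw1 : ∑ a, w a = 1) (δ κ : ℝ) (x y s : A) :
    ∑ t, Fmat w δ κ x y s t = w s * Kmat w δ s x * Kmat w δ s y := by
  have e : ∀ t, Fmat w δ κ x y s t =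
      ((1 - δ) ^ 2 * w x * kd y x * kd s x + δ * (1 - δ) * w x * w y * kd s y
        + κ * w x * kd y x * (w s - kd s x)) * kd t x
      + (δ * (1 - δ) * w x * w y * kd s x) * kd t y
      + (δ ^ 2 * w x * w y * w s + κ * w x * kd y x * (kd s x - w s)) * w t := by
    intro t; unfold Fmat; ring
  simp only [e, Finset.sum_add_distrib, ← Finset.mul_sum, sum_kd1, hw1]
  unfold Kmat
  by_cases h1 : s = x
  · subst h1
    by_cases h2 : s = y
    · subst h2
      simp only [kd_self]; ring
    · simp only [kd_self, kd_ne h2, kd_ne (Ne.symm h2)]; ring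
  · by_cases h2 : s = y
    · subst h2
      simp only [kd_self, kd_ne h1, kd_ne (Ne.symm h1)]; ring
    · simp only [kd_ne h1, kd_ne h2]; ring

theorem sum_wKK {A : Type} [Fintype A] (w : A → ℝ) (hw1 : ∑ a, w a = 1) (δ ε : ℝ)
    (h : 1 - ε = (1 - δ) ^ 2) (x y : A) :
    ∑ s, w s * Kmat w δ s x * Kmat w δ s y = Emat w ε x y := by
  have e : ∀ s, w s * Kmat w δ s x * Kmat w δ s y =
      ((1 - δ) ^ 2 * w s * kd s y) * kd s x + ((1 - δ) * δ * w y * w s) * kd s x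
      + ((1 - δ) * δ * w x * w s) * kd s y + (δ ^ 2 * w x * w y) * w s := by
    intro s; unfold Kmat; ring
  simp only [e, Finset.sum_add_distrib, sum_kd]
  rw [← Finset.mul_sum, hw1]
  unfold Emat
  rw [h, show ε = 1 - (1 - δ) ^ 2 by linarith]
  ring

theorem Fmat_sum_xy {A : Type} [Fintype A] (w : A → ℝ) (hw1 : ∑ a, w a = 1) (δ ε κ : ℝ)
    (h : 1 - ε = (1 - δ) ^ 2) (s t : A) :
    ∑ x, ∑ y, Fmat w δ κ x y s t = Emat w (ε + κ) s t := by
  have e : ∀ x y, Fmat w δ κ x y s t =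
      ((1 - δ) ^ 2 * w x * kd s x * kd t x
        + κ * w x * (kd s x * w t + w s * kd t x - kd s x * kd t x - w s * w t)) * kd y x
      + (δ * (1 - δ) * w x * kd s x * w y) * kd y t
      + (δ * (1 - δ) * w x * kd t x * w y) * kd y s
      + (δ ^ 2 * w x * w s * w t) * w y := by
    intro x y
    unfold Fmat
    rw [kd_comm y t, kd_comm y s]
    ring
  have e2 : ∀ x, ∑ y, Fmat w δ κ x y s t =
      (((1 - δ) ^ 2 - κ) * w x * kd x t) * kd x s
      + ((κ * w t + δ * (1 - δ) * w t) * w x) * kd x s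
      + ((κ * w s + δ * (1 - δ) * w s) * w x) * kd x t
      + ((δ ^ 2 - κ) * w s * w t) * w x := by
    intro x
    simp only [e, Finset.sum_add_distrib, sum_kd]
    rw [← Finset.mul_sum, hw1, kd_comm s x, kd_comm t x]
    ring
  simp only [e2, Finset.sum_add_distrib, sum_kd]
  rw [← Finset.mul_sum, hw1]
  unfold Emat
  rw [show ε = 1 - (1 - δ) ^ 2 by linarith]
  ring

theorem good_E_step (k : ℕ) {A B : Type} [Fintype A] [Fintype B] (w : A → ℝ) (hw : ∀ a, 0 ≤ w a)
    (hw1 : ∑ a, w a = 1) (W : A → B → ℝ) (hW : ∀ a b, 0 ≤ W a b) (hW1 : ∀ a, ∑ b, W a b = 1)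
    (δ ε κ : ℝ) (h : 1 - ε = (1 - δ) ^ 2)
    (hδ0 : 0 ≤ δ) (hδ1 : δ ≤ 1) (hκ0 : 0 ≤ κ) (hκ1 : κ ≤ (1 - δ) ^ 2)
    (hκ2 : ∀ x, κ * w x ≤ δ ^ 2 * (w x) ^ 2) (hg : GoodM k (Emat w (ε + κ))) :
    GoodM (k + 1) (fun x c => ∑ y, Emat w ε x y * W y c) := by
  have key : ∀ (x : A) (c : B) (s : A),
      ∑ t, ∑ y, Fmat w δ κ x y s t * W y c = w s * Kmat w δ s x * ∑ y, Kmat w δ s y * W y c := by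
    intro x c s
    rw [Finset.sum_comm, Finset.mul_sum]
    apply Finset.sum_congr rfl
    intro y _
    rw [← Finset.sum_mul, Fmat_sum_t w hw1]
    ring
  have hE : ∑ x, ∑ y, Emat w ε x y = 1 := by
    unfold Emat
    simp only [kd_comm _ _, Finset.sum_add_distrib, ← Finset.mul_sum, hw1]
    have : ∀ x : A, ∑ y, kd x y = 1 := by
      intro x; simp only [kd_comm x]; exact sum_kd1 x
    simp only [this, mul_one, ← Finset.mul_sum, hw1]
    ring
  refine good_step k _ (Emat w (ε + κ)) (fun x c s t => ∑ y, Fmat w δ κ x y s t * W y c)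
    ?_ ?_ ?_ ?_ (fun s x => w s * Kmat w δ s x) (fun s c => ∑ y, Kmat w δ s y * W y c) ?_
    (fun s x => w s * Kmat w δ s x) (fun s c => ∑ y, Kmat w δ s y * W y c) ?_ hg
  · intro x c s t
    exact Finset.sum_nonneg fun y _ =>
      mul_nonneg (Fmat_nonneg w δ κ x y s t hw hδ0 hδ1 hκ0 hκ1 hκ2) (hW y c)
  · rw [← hE]
    apply Finset.sum_congr rfl
    intro x _
    rw [Finset.sum_comm]
    simp only [← Finset.mul_sum, hW1, mul_one]
  · intro x c
    simp only [key]
    simp only [Finset.mul_sum]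
    rw [Finset.sum_comm]
    apply Finset.sum_congr rfl
    intro y _
    rw [← sum_wKK w hw1 δ ε h, Finset.sum_mul]
    apply Finset.sum_congr rfl
    intro s _
    ring
  · intro s t
    rw [← Fmat_sum_xy w hw1 δ ε κ h]
    apply Finset.sum_congr rfl
    intro x _
    rw [Finset.sum_comm]
    simp only [← Finset.mul_sum, hW1, mul_one]
  · exact key
  · intro x c t
    simp only [Fmat_symm w δ κ x _ _ t]
    exact key x c t

theorem good_zero {A B : Type} [Fintype A] [Fintype B] (M : A → B → ℝ) (r : A → ℝ) (q : B → ℝ)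
    (hr : ∑ a, r a = 1) (hq : ∑ b, q b = 1) (hM : ∀ a b, M a b = r a * q b) : GoodM 0 M := by
  show Indep (fun p : A × B => M p.1 p.2) Prod.fst Prod.snd
  intro a b
  rw [pr_pair, pr_total _ (fun ω : A × B => ω.1 = a) Prod.snd,
    pr_total _ (fun ω : A × B => ω.2 = b) Prod.fst]
  simp only [pr_pair]
  have : ∀ x : A, pr (fun p : A × B => M p.1 p.2) (fun ω => ω.2 = b ∧ ω.1 = x) = M x b := by
    intro x
    rw [← pr_pair M]
    exact pr_congr _ fun ω => and_comm
  simp only [this]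
  simp only [hM]
  rw [← Finset.mul_sum, ← Finset.sum_mul, hr, hq]
  ring

theorem good_E {A : Type} [Fintype A] (w : A → ℝ) (hw : ∀ a, 0 ≤ w a)
    (hw1 : ∑ a, w a = 1) (ε₀ : ℝ) (hε : 0 < ε₀) (hε1 : ε₀ ≤ 1) : ∃ k, GoodM k (Emat w ε₀) := by
  have hδ₀ : 0 < 1 - Real.sqrt (1 - ε₀) := by
    have : Real.sqrt (1 - ε₀) < 1 := by
      rw [Real.sqrt_lt' one_pos]; linarith
    linarith
  set δ₀ := 1 - Real.sqrt (1 - ε₀) with hδ₀'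
  obtain ⟨κ₀, k1, -, k2⟩ := exists_small (fun a => δ₀ ^ 2 * (w a) ^ 2) w
  have k3 : ∀ a, κ₀ * w a ≤ δ₀ ^ 2 * (w a) ^ 2 := by
    intro a
    rcases (hw a).eq_or_lt with h | h
    · rw [← h]; simp
    · exact (k2 a (by positivity)).le
  have main : ∀ n : ℕ, ∀ ε, ε₀ ≤ ε → ε ≤ 1 → 1 - ε ≤ n * κ₀ → ∃ k, GoodM k (Emat w ε) := by
    intro n
    induction n with
    | zero =>
      intro ε _ h2 h3
      have : ε = 1 := by simp at h3; linarith
      subst this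
      refine ⟨0, ?_⟩
      exact good_zero _ w w hw1 hw1 (fun a b => by unfold Emat; ring)
    | succ n ih =>
      intro ε h1 h2 h3
      push_cast at h3
      have c0 : 0 ≤ 1 - ε := by linarith
      obtain ⟨k, hk⟩ := ih (ε + min κ₀ (1 - ε)) (by
          have : 0 ≤ min κ₀ (1 - ε) := le_min k1.le c0
          linarith) (by linarith [min_le_right κ₀ (1 - ε)]) (by
          rcases min_choice κ₀ (1 - ε) with h | h <;> rw [h]
          · linarith
          · have : 0 ≤ (n : ℝ) * κ₀ := by positivity
            linarith)
      have sq : (Real.sqrt (1 - ε)) ^ 2 = 1 - ε := Real.sq_sqrt c0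
      have hs : Real.sqrt (1 - ε) ≤ Real.sqrt (1 - ε₀) := Real.sqrt_le_sqrt (by linarith)
      have hs0 := Real.sqrt_nonneg (1 - ε)
      have hs1 := Real.sqrt_nonneg (1 - ε₀)
      have hd : δ₀ ≤ 1 - Real.sqrt (1 - ε) := by linarith
      have := good_E_step k w hw hw1 (fun x y => kd x y) kd_nonneg
        (fun x => by simp only [kd_comm x]; exact sum_kd1 x) (1 - Real.sqrt (1 - ε)) ε
        (min κ₀ (1 - ε)) (by rw [sub_sub_cancel, sq]) (by linarith) (by linarith)
        (le_min k1.le c0) (by rw [sub_sub_cancel, sq]; exact min_le_right _ _) (by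
          intro x
          calc min κ₀ (1 - ε) * w x ≤ κ₀ * w x :=
                mul_le_mul_of_nonneg_right (min_le_left _ _) (hw x)
            _ ≤ δ₀ ^ 2 * (w x) ^ 2 := k3 x
            _ ≤ _ := by gcongr) hk
      refine ⟨k + 1, ?_⟩
      simp only [sum_kd] at this
      exact this
  obtain ⟨n, hn⟩ := exists_nat_ge ((1 - ε₀) / κ₀)
  exact main n ε₀ le_rfl hε1 (by rwa [div_le_iff₀ k1] at hn)

/-- matrices whose support is a rectangle -/
theorem good_rect {A B : Type} [Fintype A] [Fintype B] (M : A → B → ℝ) (h0 : ∀ a b, 0 ≤ M a b)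
    (h1 : ∑ a, ∑ b, M a b = 1) (P : A → Prop) (Q : B → Prop)
    (hPQ : ∀ a b, 0 < M a b ↔ P a ∧ Q b) : ∃ k, GoodM k M := by
  set r : A → ℝ := fun a => ∑ b, M a b with hr
  set S : B → ℝ := fun b => ∑ a, M a b with hS
  have r0 : ∀ a, 0 ≤ r a := fun a => Finset.sum_nonneg fun b _ => h0 a b
  have r1 : ∑ a, r a = 1 := h1
  have S1 : ∑ b, S b = 1 := by rw [← h1]; exact Finset.sum_comm
  have S0 : ∀ b, 0 ≤ S b := fun b => Finset.sum_nonneg fun a _ => h0 a b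
  obtain ⟨ε, e0, e1, e2⟩ := exists_small (fun p : A × B => M p.1 p.2) (fun p => r p.1 * S p.2)
  have e1' : 0 < 1 - ε := by linarith
  have hb : ∀ a b, 0 ≤ M a b - ε * (r a * S b) := by
    intro a b
    rcases (h0 a b).eq_or_lt with h | h
    · have : r a * S b = 0 := by
        by_contra hne
        have ra : 0 < r a := lt_of_le_of_ne (r0 a) (fun h => hne (by rw [← h, zero_mul]))
        have Sb : 0 < S b := lt_of_le_of_ne (S0 b) (fun h => hne (by rw [← h, mul_zero]))
        obtain ⟨b', -, hb'⟩ := (Finset.sum_pos_iff_of_nonneg (fun b _ => h0 a b)).1 ra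
        obtain ⟨a', -, ha'⟩ := (Finset.sum_pos_iff_of_nonneg (fun a _ => h0 a b)).1 Sb
        have := (hPQ a b).2 ⟨((hPQ a b').1 hb').1, ((hPQ a' b).1 ha').2⟩
        linarith
      rw [this, ← h]; simp
    · linarith [e2 (a, b) h]
  have hM0 : ∀ a b, r a = 0 → M a b = 0 := by
    intro a b h
    exact (Finset.sum_eq_zero_iff_of_nonneg (fun b _ => h0 a b)).1 h b (Finset.mem_univ _)
  set W : A → B → ℝ := fun a b =>
    if r a = 0 then S b else (M a b - ε * (r a * S b)) / (r a * (1 - ε)) with hW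
  have rW : ∀ a b, r a * W a b = (M a b - ε * (r a * S b)) / (1 - ε) := by
    intro a b
    simp only [hW]
    split_ifs with h
    · rw [hM0 a b h, h]; simp
    · field_simp
  have W0 : ∀ a b, 0 ≤ W a b := by
    intro a b
    simp only [hW]
    split_ifs with h
    · exact S0 b
    · exact div_nonneg (hb a b) (mul_nonneg (r0 a) e1'.le)
  have W1 : ∀ a, ∑ b, W a b = 1 := by
    intro a
    simp only [hW]
    split_ifs with h
    · exact S1
    · rw [← Finset.sum_div, Finset.sum_sub_distrib, ← Finset.mul_sum, ← Finset.mul_sum, S1]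
      rw [div_eq_one_iff_eq (mul_ne_zero h e1'.ne')]
      show r a - _ = _
      ring
  have c0 : 0 ≤ 1 - ε := e1'.le
  have sq : (Real.sqrt (1 - ε)) ^ 2 = 1 - ε := Real.sq_sqrt c0
  obtain ⟨k, hk⟩ := good_E r r0 r1 ε e0 e1.le
  have hs0 := Real.sqrt_nonneg (1 - ε)
  have hs1 : Real.sqrt (1 - ε) ≤ 1 := Real.sqrt_le_one.2 (by linarith)
  have := good_E_step k r r0 r1 W W0 W1 (1 - Real.sqrt (1 - ε)) ε 0 (by rw [sub_sub_cancel, sq])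
    (by linarith) (by linarith) le_rfl (by positivity) (by intro x; rw [zero_mul]; positivity)
    (by rw [add_zero]; exact hk)
  refine ⟨k + 1, ?_⟩
  convert this using 3 with x c
  have e : ∀ y, Emat r ε x y * W y c = ((1 - ε) * (r y * W y c)) * kd y x
      + (ε * r x) * (r y * W y c) := by
    intro y
    unfold Emat
    by_cases h : y = x
    · subst h; ring
    · rw [kd_ne h, kd_ne (Ne.symm h)]; ring
  simp only [e, Finset.sum_add_distrib, sum_kd, ← Finset.mul_sum]
  simp only [rW, ← Finset.sum_div, Finset.sum_sub_distrib, ← Finset.mul_sum, ← Finset.sum_mul, r1]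
  rw [show ∑ i, M i c = S c from rfl]
  field_simp
  ring

end PartThree

section PartFour

theorem rank_one_decomp {A B : Type} [Fintype A] [Fintype B] (N : A → B → ℝ)
    (h0 : ∀ a b, 0 ≤ N a b) (P : A → Prop) (Q : B → Prop) (hPQ : ∀ a b, 0 < N a b ↔ P a ∧ Q b) :
    ∃ (x : A → A → ℝ) (z : A → B → ℝ), (∀ i a, 0 ≤ x i a) ∧ (∀ i b, 0 ≤ z i b) ∧
      (∀ a b, ∑ i, x i a * z i b = N a b) ∧
      (∀ i a b, 0 < x i a * z i b ↔ P i ∧ P a ∧ Q b) := by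
  set S : B → ℝ := fun b => ∑ a, N a b with hS
  set c : A → ℝ := fun i => if P i then 1 else 0 with hc
  set m : ℝ := ∑ i, c i with hm
  obtain ⟨θ, t0, -, t2⟩ := exists_small
    (fun o : Option (A × B) => o.elim 1 (fun p => N p.1 p.2))
    (fun o => o.elim m (fun p => S p.2))
  have t3 : 0 < 1 - θ * m := by have := t2 none one_pos; simp at this; linarith
  have t4 : ∀ a b, 0 < N a b → θ * S b < N a b := fun a b h => t2 (some (a, b)) h
  have hz0 : ∀ a b, ¬ (P a ∧ Q b) → N a b = 0 := by
    intro a b h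
    rw [← hPQ] at h
    exact le_antisymm (not_lt.1 h) (h0 a b)
  have hS0 : ∀ b, ¬ Q b → S b = 0 := by
    intro b h
    exact Finset.sum_eq_zero fun a _ => hz0 a b (fun hh => h hh.2)
  set η := θ / (1 - θ * m) with hη
  have η0 : 0 < η := div_pos t0 t3
  set x : A → A → ℝ := fun i a => if P i ∧ P a then kd i a + η else 0 with hx
  set z : A → B → ℝ := fun i b => if P i ∧ Q b then N i b - θ * S b else 0 with hz
  have xpos : ∀ i a, P i ∧ P a → 0 < x i a := by
    intro i a h
    simp only [hx, if_pos h]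
    linarith [kd_nonneg i a]
  have zpos : ∀ i b, P i ∧ Q b → 0 < z i b := by
    intro i b h
    simp only [hz, if_pos h]
    linarith [t4 i b ((hPQ i b).2 h)]
  refine ⟨x, z, ?_, ?_, ?_, ?_⟩
  · intro i a
    by_cases h : P i ∧ P a
    · exact (xpos i a h).le
    · simp only [hx, if_neg h]; exact le_rfl
  · intro i a
    by_cases h : P i ∧ Q a
    · exact (zpos i a h).le
    · simp only [hz, if_neg h]; exact le_rfl
  · intro a b
    by_cases ha : P a
    · have e : ∀ i, x i a * z i b = (c i * (N i b - θ * S b)) * kd i a + η * N i b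
          - (η * θ * S b) * c i := by
        intro i
        simp only [hx, hz, hc]
        by_cases hi : P i
        · by_cases hb : Q b
          · simp only [hi, ha, hb, and_self, if_true]; ring
          · simp only [hi, ha, hb, and_self, and_false, if_true, if_false]
            rw [hz0 i b (fun h => hb h.2), hS0 b hb]; ring
        · simp only [hi, false_and, if_false]
          rw [hz0 i b (fun h => hi h.1)]; ring
      simp only [e, Finset.sum_sub_distrib, Finset.sum_add_distrib, sum_kd, ← Finset.mul_sum]
      rw [← hm, show ∑ i, N i b = S b from rfl, show c a = 1 by simp [hc, ha]]
      have : η * (1 - θ * m) = θ := by rw [hη]; field_simp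
      linear_combination (S b) * this
    · rw [hz0 a b (fun h => ha h.1)]
      apply Finset.sum_eq_zero
      intro i _
      simp [hx, ha]
  · intro i a b
    constructor
    · intro h
      by_cases hxx : P i ∧ P a
      · by_cases hzz : P i ∧ Q b
        · exact ⟨hxx.1, hxx.2, hzz.2⟩
        · simp only [hz, if_neg hzz, mul_zero, lt_irrefl] at h
      · simp only [hx, if_neg hxx, zero_mul, lt_irrefl] at h
    · rintro ⟨h1, h2, h3⟩
      exact mul_pos (xpos i a ⟨h1, h2⟩) (zpos i b ⟨h1, h3⟩)

/-- coupling step for a rank one decomposition and a reflexive symmetric relation -/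
theorem good_couple {A B T : Type} [Fintype A] [Fintype B] [Fintype T] (M : A → B → ℝ)
    (h0 : ∀ a b, 0 ≤ M a b) (h1 : ∑ a, ∑ b, M a b = 1) (x : T → A → ℝ) (z : T → B → ℝ)
    (hR0 : ∀ σ a b, 0 ≤ x σ a * z σ b) (hRM : ∀ a b, ∑ σ, x σ a * z σ b = M a b)
    (adj : T → T → Prop) (hrefl : ∀ σ, adj σ σ) (hsymm : ∀ σ τ, adj σ τ → adj τ σ) :
    ∃ C : T → T → ℝ, (∀ σ τ, 0 ≤ C σ τ) ∧ ∑ σ, ∑ τ, C σ τ = 1 ∧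
      (∀ σ τ, 0 < C σ τ ↔ adj σ τ ∧ ∃ a b, 0 < x σ a * z σ b ∧ 0 < x τ a * z τ b) ∧
      (∀ k, GoodM k C → GoodM (k + 1) M) := by
  set R : T → A → B → ℝ := fun σ a b => x σ a * z σ b with hR
  set c : T → T → ℝ := fun σ τ => if adj σ τ then 1 else 0 with hc
  have c0 : ∀ σ τ, 0 ≤ c σ τ := by intro σ τ; simp only [hc]; split_ifs <;> norm_num
  have c1 : ∀ σ τ, c σ τ ≤ 1 := by intro σ τ; simp only [hc]; split_ifs <;> norm_num
  have cs : ∀ σ τ, c σ τ = c τ σ := by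
    intro σ τ
    have : adj σ τ ↔ adj τ σ := ⟨hsymm σ τ, hsymm τ σ⟩
    simp only [hc, this]
  have RM : ∀ a b, ∑ σ, R σ a b = M a b := hRM
  set F : A → B → T → T → ℝ := fun a b σ τ =>
    R σ a b * (R τ a b * c σ τ / M a b)
      + (R σ a b * (1 - ∑ ρ, R ρ a b * c σ ρ / M a b)) * kd τ σ with hF
  have Fsymm : ∀ a b σ τ, F a b σ τ = F a b τ σ := by
    intro a b σ τ
    by_cases h : σ = τ
    · rw [h]
    · simp only [hF, kd_ne h, kd_ne (Ne.symm h), cs σ τ]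
      ring
  have le1 : ∀ a b σ, 0 ≤ 1 - ∑ ρ, R ρ a b * c σ ρ / M a b := by
    intro a b σ
    have : ∑ ρ, R ρ a b * c σ ρ / M a b ≤ ∑ ρ, R ρ a b / M a b := by
      apply Finset.sum_le_sum
      intro ρ _
      apply div_le_div_of_nonneg_right _ (h0 a b)
      exact mul_le_of_le_one_right (hR0 ρ a b) (c1 σ ρ)
    have e : ∑ ρ, R ρ a b / M a b = M a b / M a b := by rw [← Finset.sum_div, RM]
    rw [e] at this
    linarith [div_self_le_one (M a b)]
  have F1 : ∀ a b σ τ, 0 ≤ R σ a b * (R τ a b * c σ τ / M a b) := by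
    intro a b σ τ
    exact mul_nonneg (hR0 σ a b) (div_nonneg (mul_nonneg (hR0 τ a b) (c0 σ τ)) (h0 a b))
  have F2 : ∀ a b σ τ, 0 ≤ (R σ a b * (1 - ∑ ρ, R ρ a b * c σ ρ / M a b)) * kd τ σ := by
    intro a b σ τ
    exact mul_nonneg (mul_nonneg (hR0 σ a b) (le1 a b σ)) (kd_nonneg _ _)
  have F0 : ∀ a b σ τ, 0 ≤ F a b σ τ := fun a b σ τ => add_nonneg (F1 a b σ τ) (F2 a b σ τ)
  have Fsum : ∀ a b σ, ∑ τ, F a b σ τ = x σ a * z σ b := by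
    intro a b σ
    simp only [hF, Finset.sum_add_distrib, ← Finset.mul_sum, sum_kd1]
    simp only [hR]
    ring
  have Fsum' : ∀ a b τ, ∑ σ, F a b σ τ = x τ a * z τ b := by
    intro a b τ
    simp only [Fsymm a b _ τ]
    exact Fsum a b τ
  have FM : ∀ a b, ∑ σ, ∑ τ, F a b σ τ = M a b := by
    intro a b
    simp only [Fsum]
    exact hRM a b
  refine ⟨fun σ τ => ∑ a, ∑ b, F a b σ τ, ?_, ?_, ?_, ?_⟩
  · intro σ τ
    exact Finset.sum_nonneg fun a _ => Finset.sum_nonneg fun b _ => F0 a b σ τ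
  · rw [← h1]
    simp only [← FM]
    have e1 : ∀ σ, ∑ τ, ∑ a, ∑ b, F a b σ τ = ∑ a, ∑ b, ∑ τ, F a b σ τ := by
      intro σ
      rw [Finset.sum_comm]
      exact Finset.sum_congr rfl fun a _ => Finset.sum_comm
    simp only [e1]
    rw [Finset.sum_comm]
    exact Finset.sum_congr rfl fun a _ => Finset.sum_comm
  · intro σ τ
    rw [Finset.sum_pos_iff_of_nonneg (fun a _ => Finset.sum_nonneg fun b _ => F0 a b σ τ)]
    have pos : ∀ a b, 0 < F a b σ τ → adj σ τ ∧ 0 < R σ a b ∧ 0 < R τ a b := by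
      intro a b hp
      refine ⟨?_, ?_, ?_⟩
      · by_contra hn
        have hne : τ ≠ σ := fun h => hn (h ▸ hrefl σ)
        have hcz : c σ τ = 0 := by simp [hc, hn]
        simp [hF, kd_ne hne, hcz] at hp
      · refine lt_of_le_of_ne (hR0 σ a b) (fun h => ?_)
        have h' : R σ a b = 0 := h.symm
        simp [hF, h'] at hp
      · refine lt_of_le_of_ne (hR0 τ a b) (fun h => ?_)
        have h' : R τ a b = 0 := h.symm
        rw [Fsymm] at hp
        simp [hF, h'] at hp
    constructor
    · rintro ⟨a, -, ha⟩
      rw [Finset.sum_pos_iff_of_nonneg (fun b _ => F0 a b σ τ)] at ha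
      obtain ⟨b, -, hb⟩ := ha
      obtain ⟨p1, p2, p3⟩ := pos a b hb
      exact ⟨p1, a, b, p2, p3⟩
    · rintro ⟨hadj, a, b, p2, p3⟩
      refine ⟨a, Finset.mem_univ _, ?_⟩
      rw [Finset.sum_pos_iff_of_nonneg (fun b _ => F0 a b σ τ)]
      refine ⟨b, Finset.mem_univ _, ?_⟩
      have hMp : 0 < M a b := by
        rw [← hRM]
        exact (Finset.sum_pos_iff_of_nonneg (fun σ _ => hR0 σ a b)).2 ⟨σ, Finset.mem_univ _, p2⟩
      have hc1 : c σ τ = 1 := by simp [hc, hadj]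
      apply add_pos_of_pos_of_nonneg _ (F2 a b σ τ)
      rw [hc1, mul_one]
      exact mul_pos p2 (div_pos p3 hMp)
  · intro k hg
    exact good_step k M _ F F0 h1 FM (fun _ _ => rfl) x z Fsum x z Fsum' hg

theorem good_chain (l : ℕ) : ∀ (A B : Type) [Fintype A] [Fintype B] (M : A → B → ℝ),
    (∀ a b, 0 ≤ M a b) → ∑ a, ∑ b, M a b = 1 → ∀ (P : ℕ → A → Prop) (Q : ℕ → B → Prop),
    (∀ a b, 0 < M a b ↔ ∃ t, t ≤ l ∧ P t a ∧ Q t b) →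
    (∀ t, t < l → ∃ a b, P t a ∧ Q t b ∧ P (t + 1) a ∧ Q (t + 1) b) → ∃ k, GoodM k M := by
  induction l with
  | zero =>
    intro A B _ _ M h0 h1 P Q hPQ _
    apply good_rect M h0 h1 (P 0) (Q 0)
    intro a b
    rw [hPQ]
    constructor
    · rintro ⟨t, ht, h⟩
      obtain rfl : t = 0 := by omega
      exact h
    · intro h
      exact ⟨0, le_rfl, h⟩
  | succ l ih =>
    intro A B _ _ M h0 h1 P Q hPQ hcons
    set cnt : A → B → ℝ := fun a b =>
      ∑ t : Fin (l + 2), if P t a ∧ Q t b then 1 else 0 with hcnt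
    set N : Fin (l + 2) → A → B → ℝ := fun t a b =>
      if P t a ∧ Q t b then M a b / cnt a b else 0 with hN
    have cpos : ∀ (t : Fin (l + 2)) a b, P t a ∧ Q t b → 0 < cnt a b := by
      intro t a b h
      simp only [hcnt]
      rw [Finset.sum_pos_iff_of_nonneg (fun s _ => by split_ifs <;> norm_num)]
      exact ⟨t, Finset.mem_univ _, by rw [if_pos h]; exact one_pos⟩
    have Mpos : ∀ (t : Fin (l + 2)) a b, P t a ∧ Q t b → 0 < M a b := by
      intro t a b h
      rw [hPQ]
      exact ⟨t, by omega, h⟩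
    have Npos : ∀ (t : Fin (l + 2)) a b, P t a ∧ Q t b → 0 < N t a b := by
      intro t a b h
      simp only [hN, if_pos h]
      exact div_pos (Mpos t a b h) (cpos t a b h)
    have N0 : ∀ t a b, 0 ≤ N t a b := by
      intro t a b
      by_cases h : P t a ∧ Q t b
      · exact (Npos t a b h).le
      · simp only [hN, if_neg h]; exact le_rfl
    have NPQ : ∀ (t : Fin (l + 2)) a b, 0 < N t a b ↔ P t a ∧ Q t b := by
      intro t a b
      refine ⟨fun h => ?_, Npos t a b⟩
      by_contra hn
      simp only [hN, if_neg hn, lt_irrefl] at h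
    have Nsum : ∀ a b, ∑ t, N t a b = M a b := by
      intro a b
      have e : ∀ t, N t a b = (M a b / cnt a b) * (if P t a ∧ Q t b then 1 else 0) := by
        intro t
        simp only [hN]
        split_ifs <;> simp
      simp only [e, ← Finset.mul_sum]
      change M a b / cnt a b * cnt a b = M a b
      rcases (h0 a b).eq_or_lt with h | h
      · rw [← h]; simp
      · obtain ⟨t, ht, hh⟩ := (hPQ a b).1 h
        have := cpos ⟨t, by omega⟩ a b hh
        field_simp
    choose x z hx hz hsum hpos using fun t : Fin (l + 2) =>
      rank_one_decomp (N t) (N0 t) (P t) (Q t) (NPQ t)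
    set adj : Fin (l + 2) × A → Fin (l + 2) × A → Prop := fun σ τ =>
      (σ.1 : ℕ) ≤ τ.1 + 1 ∧ (τ.1 : ℕ) ≤ σ.1 + 1 with hadj
    obtain ⟨C, C0, C1, Cpos, Cg⟩ := good_couple M h0 h1 (fun σ : Fin (l + 2) × A => x σ.1 σ.2)
      (fun σ => z σ.1 σ.2) (fun σ a b => mul_nonneg (hx _ _ _) (hz _ _ _))
      (fun a b => by simp only [Fintype.sum_prod_type, hsum, Nsum]) adj
      (fun σ => ⟨by omega, by omega⟩) (fun σ τ h => ⟨h.2, h.1⟩)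
    have ne : ∀ t, t ≤ l + 1 → ∃ a b, P t a ∧ Q t b := by
      intro t ht
      rcases Nat.lt_or_ge t (l + 1) with h | h
      · obtain ⟨a, b, p1, p2, _⟩ := hcons t h
        exact ⟨a, b, p1, p2⟩
      · obtain rfl : t = l + 1 := by omega
        obtain ⟨a, b, _, _, p1, p2⟩ := hcons l (by omega)
        exact ⟨a, b, p1, p2⟩
    have goodC : ∀ C : Fin (l + 2) × A → Fin (l + 2) × A → ℝ, (∀ σ τ, 0 ≤ C σ τ) →
        ∑ σ, ∑ τ, C σ τ = 1 → (∀ σ τ, 0 < C σ τ ↔ adj σ τ ∧ ∃ a b,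
          0 < x σ.1 σ.2 a * z σ.1 σ.2 b ∧ 0 < x τ.1 τ.2 a * z τ.1 τ.2 b) → ∃ k, GoodM k C := by
      intro C C0 C1 Cpos
      refine ih _ _ C C0 C1
        (fun t σ => P σ.1 σ.2 ∧ ((σ.1 : ℕ) = t ∨ (σ.1 : ℕ) = t + 1))
        (fun t σ => P σ.1 σ.2 ∧ ((σ.1 : ℕ) = t ∨ (σ.1 : ℕ) = t + 1)) ?_ ?_
      · rintro ⟨s, i⟩ ⟨t, j⟩
        rw [Cpos]
        simp only [hadj, hpos]
        have hs := s.2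
        have ht := t.2
        constructor
        · rintro ⟨⟨g1, g2⟩, a, b, ⟨q1, _⟩, ⟨q2, _⟩⟩
          refine ⟨min (min (s : ℕ) t) l, by omega, ⟨q1, by omega⟩, ⟨q2, by omega⟩⟩
        · rintro ⟨u, hu, ⟨q1, g1⟩, ⟨q2, g2⟩⟩
          refine ⟨⟨by omega, by omega⟩, ?_⟩
          have : ∃ a b, (P s a ∧ Q s b) ∧ (P t a ∧ Q t b) := by
            rcases g1 with g1 | g1 <;> rcases g2 with g2 | g2 <;> rw [g1, g2]
            · obtain ⟨a, b, h⟩ := ne u (by omega)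
              exact ⟨a, b, h, h⟩
            · obtain ⟨a, b, c1, c2, c3, c4⟩ := hcons u (by omega)
              exact ⟨a, b, ⟨c1, c2⟩, ⟨c3, c4⟩⟩
            · obtain ⟨a, b, c1, c2, c3, c4⟩ := hcons u (by omega)
              exact ⟨a, b, ⟨c3, c4⟩, ⟨c1, c2⟩⟩
            · obtain ⟨a, b, h⟩ := ne (u + 1) (by omega)
              exact ⟨a, b, h, h⟩
          obtain ⟨a, b, c1, c2⟩ := this
          exact ⟨a, b, ⟨q1, c1⟩, ⟨q2, c2⟩⟩
      · intro t ht
        obtain ⟨a, b, h1, _⟩ := ne (t + 1) (by omega)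
        refine ⟨(⟨t + 1, by omega⟩, a), (⟨t + 1, by omega⟩, a), ?_⟩
        simp [h1]
    obtain ⟨k, hk⟩ := goodC C C0 C1 Cpos
    exact ⟨k + 1, Cg k hk⟩

end PartFour

section PartFive

theorem walk_extend {E : Type} (r : E → E → Prop) (hr : ∀ x, r x x) (e : ℕ → E) (n : ℕ)
    (he : ∀ t, r (e t) (e (t + 1))) (b : E) (hb : Relation.ReflTransGen r (e n) b) :
    ∃ (e' : ℕ → E) (m : ℕ), n ≤ m ∧ (∀ t, r (e' t) (e' (t + 1))) ∧ (∀ t, t ≤ n → e' t = e t) ∧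
      e' m = b := by
  induction hb with
  | refl => exact ⟨e, n, le_rfl, he, fun _ _ => rfl, rfl⟩
  | @tail b c _ hbc ih =>
    obtain ⟨e', m, hnm, h1, h2, h3⟩ := ih
    refine ⟨fun t => if t ≤ m then e' t else c, m + 1, by omega, ?_, ?_, ?_⟩
    · intro t
      rcases lt_trichotomy t m with h | h | h
      · have a1 : t ≤ m := by omega
        have a2 : t + 1 ≤ m := by omega
        simp only [a1, a2, if_true]
        exact h1 t
      · subst h
        have a2 : ¬ (t + 1 ≤ t) := by omega
        simp only [le_refl, a2, if_true, if_false, h3]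
        exact hbc
      · have a1 : ¬ (t ≤ m) := by omega
        have a2 : ¬ (t + 1 ≤ m) := by omega
        simp only [a1, a2, if_false]
        exact hr c
    · intro t ht
      have a1 : t ≤ m := by omega
      simp only [a1, if_true]
      exact h2 t ht
    · have a2 : ¬ (m + 1 ≤ m) := by omega
      simp only [a2, if_false]

theorem walk_exists {E : Type} [Fintype E] (r : E → E → Prop) (hr : ∀ x, r x x) (x0 : E)
    (hc : ∀ x y, Relation.ReflTransGen r x y) :
    ∃ (e : ℕ → E) (n : ℕ), (∀ t, r (e t) (e (t + 1))) ∧ ∀ x, ∃ t, t ≤ n ∧ e t = x := by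
  have key : ∀ S : Finset E, ∃ (e : ℕ → E) (n : ℕ), (∀ t, r (e t) (e (t + 1))) ∧
      ∀ x ∈ S, ∃ t, t ≤ n ∧ e t = x := by
    intro S
    induction S using Finset.induction_on with
    | empty => exact ⟨fun _ => x0, 0, fun _ => hr x0, by simp⟩
    | insert a S _ ih =>
      obtain ⟨e, n, h1, h2⟩ := ih
      obtain ⟨e', m, hnm, g1, g2, g3⟩ := walk_extend r hr e n h1 a (hc _ _)
      refine ⟨e', m, g1, ?_⟩
      intro x hx
      rcases Finset.mem_insert.1 hx with rfl | hx
      · exact ⟨m, le_rfl, g3⟩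
      · obtain ⟨t, ht, hh⟩ := h2 x hx
        exact ⟨t, by omega, by rw [g2 t ht, hh]⟩
  obtain ⟨e, n, h1, h2⟩ := key Finset.univ
  exact ⟨e, n, h1, fun x => h2 x (Finset.mem_univ x)⟩

theorem good_of_not_block {m n : ℕ} (M : Matrix (Fin m) (Fin n) ℝ) (h0 : ∀ i j, 0 ≤ M i j)
    (h1 : ∑ i, ∑ j, M i j = 1) (hnb : ¬ IsBlockMatrix M) : ∃ k, GoodM k M := by
  set r : {p : Fin m × Fin n // M p.1 p.2 ≠ 0} → {p : Fin m × Fin n // M p.1 p.2 ≠ 0} → Prop :=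
    fun p q => p.1.1 = q.1.1 ∨ p.1.2 = q.1.2 with hr
  have hex : ∃ p : {p : Fin m × Fin n // M p.1 p.2 ≠ 0}, True := by
    by_contra hno
    have : ∑ i, ∑ j, M i j = 0 := by
      apply Finset.sum_eq_zero
      intro i _
      apply Finset.sum_eq_zero
      intro j _
      by_contra h
      exact hno ⟨⟨(i, j), h⟩, trivial⟩
    rw [h1] at this
    exact one_ne_zero this
  obtain ⟨x0, -⟩ := hex
  have hc : ∀ x y, Relation.ReflTransGen r x y := by
    intro x y
    by_contra hxy
    apply hnb
    have hrow : ∀ q, Relation.ReflTransGen r x q → ∀ p : {p : Fin m × Fin n // M p.1 p.2 ≠ 0},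
        (q.1.1 = p.1.1 ∨ q.1.2 = p.1.2) → Relation.ReflTransGen r x p :=
      fun q hq p h => hq.tail h
    have yrow : y.1.1 ∉ Finset.univ.filter
        (fun i => ∃ q, Relation.ReflTransGen r x q ∧ q.1.1 = i) := by
      simp only [Finset.mem_filter, Finset.mem_univ, true_and]
      rintro ⟨q, hq, h⟩
      exact hxy (hrow q hq y (Or.inl h))
    have ycol : y.1.2 ∉ Finset.univ.filter
        (fun j => ∃ q, Relation.ReflTransGen r x q ∧ q.1.2 = j) := by
      simp only [Finset.mem_filter, Finset.mem_univ, true_and]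
      rintro ⟨q, hq, h⟩
      exact hxy (hrow q hq y (Or.inr h))
    have xrow : x.1.1 ∈ Finset.univ.filter
        (fun i => ∃ q, Relation.ReflTransGen r x q ∧ q.1.1 = i) := by
      simp only [Finset.mem_filter, Finset.mem_univ, true_and]
      exact ⟨x, Relation.ReflTransGen.refl, rfl⟩
    have xcol : x.1.2 ∈ Finset.univ.filter
        (fun j => ∃ q, Relation.ReflTransGen r x q ∧ q.1.2 = j) := by
      simp only [Finset.mem_filter, Finset.mem_univ, true_and]
      exact ⟨x, Relation.ReflTransGen.refl, rfl⟩
    refine ⟨_, _, ⟨_, xrow⟩, ⟨_, Finset.mem_compl.2 yrow⟩, ⟨_, xcol⟩, ⟨_, Finset.mem_compl.2 ycol⟩,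
      ⟨_, xrow, _, xcol, x.2⟩, ⟨_, Finset.mem_compl.2 yrow, _, Finset.mem_compl.2 ycol, y.2⟩, ?_⟩
    intro i j h
    by_contra hne
    simp only [Finset.mem_compl, Finset.mem_filter, Finset.mem_univ, true_and] at h
    rcases h with ⟨⟨q, hq, h⟩, h'⟩ | ⟨h', ⟨q, hq, h⟩⟩
    · exact h' ⟨⟨(i, j), hne⟩, hrow q hq ⟨(i, j), hne⟩ (Or.inl h), rfl⟩
    · exact h' ⟨⟨(i, j), hne⟩, hrow q hq ⟨(i, j), hne⟩ (Or.inr h), rfl⟩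
  obtain ⟨e, l, he, hcov⟩ := walk_exists r (fun x => Or.inl rfl) x0 hc
  refine good_chain l _ _ M h0 h1 (fun t a => a = (e t).1.1 ∨ a = (e (t + 1)).1.1)
    (fun t b => b = (e t).1.2 ∨ b = (e (t + 1)).1.2) ?_ ?_
  · intro a b
    constructor
    · intro h
      obtain ⟨t, ht, hh⟩ := hcov ⟨(a, b), h.ne'⟩
      refine ⟨t, ht, Or.inl ?_, Or.inl ?_⟩ <;> rw [hh]
    · rintro ⟨t, -, ha, hb⟩
      refine lt_of_le_of_ne (h0 a b) (Ne.symm ?_)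
      have e1 := (e t).2
      have e2 := (e (t + 1)).2
      rcases he t with h | h <;> rcases ha with ha | ha <;> rcases hb with hb | hb <;>
        subst ha <;> subst hb <;> first | assumption | (rw [h]; assumption) | (rw [← h]; assumption)
  · intro t _
    exact ⟨(e (t + 1)).1.1, (e (t + 1)).1.2, Or.inr rfl, Or.inr rfl, Or.inl rfl, Or.inl rfl⟩

end PartFive

/-- A pair of random variables `α, β` on a finite probability space is
conditionally independent (of some finite order) iff their joint probability matrix
is not a block matrix. -/
theorem condIndep_iff_not_isBlockMatrix {Ω : Type} [Fintype Ω] {m n : ℕ}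
    (μ : Ω → ℝ) (hμ : IsProb μ) (α : Ω → Fin m) (β : Ω → Fin n)
    (M : Matrix (Fin m) (Fin n) ℝ) (hM : IsJointMatrixOf M μ α β) :
    (∃ k, CondIndepOrder μ α β k) ↔ ¬ IsBlockMatrix M := by
  have h0 : ∀ i j, 0 ≤ M i j := by
    intro i j
    rw [hM]
    exact Finset.sum_nonneg fun ω _ => by
      by_cases h : α ω = i ∧ β ω = j
      · simp only [h, and_self, if_true]; exact hμ.1 ω
      · simp only [if_neg h]; exact le_rfl
  have hpos : ∀ i j, 0 < M i j ↔ ∃ ω, (α ω = i ∧ β ω = j) ∧ 0 < μ ω := by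
    intro i j
    rw [hM]
    exact pr_pos_iff hμ.1 _
  constructor
  · rintro ⟨k, hk⟩ ⟨I, J, -, -, -, -, ⟨i, hi, j, hj, hij⟩, ⟨i', hi', j', hj', hij'⟩, hz⟩
    obtain ⟨ω, ⟨w1, w2⟩, w3⟩ := (hpos i j).1 (lt_of_le_of_ne (h0 i j) (Ne.symm hij))
    obtain ⟨ω', ⟨v1, v2⟩, v3⟩ := (hpos i' j').1 (lt_of_le_of_ne (h0 i' j') (Ne.symm hij'))
    refine not_condIndep k Ω (Fin m) (Fin n) _ μ α β (fun i => i ∈ I) (fun j => j ∈ J) hμ ?_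
      ⟨ω, w3, by rw [w1]; exact hi⟩ ⟨ω', v3, by rw [v1]; exact Finset.mem_compl.1 hi'⟩ hk
    intro w hw
    have hp := (hpos (α w) (β w)).2 ⟨w, ⟨rfl, rfl⟩, hw⟩
    constructor
    · intro h
      by_contra h'
      exact hp.ne' (hz _ _ (Or.inl ⟨h, Finset.mem_compl.2 h'⟩))
    · intro h
      by_contra h'
      exact hp.ne' (hz _ _ (Or.inr ⟨Finset.mem_compl.2 h', h⟩))
  · intro hnb
    have h1 : ∑ i, ∑ j, M i j = 1 := by
      rw [← hμ.2]
      have : ∀ i j, M i j = ∑ ω, if α ω = i ∧ β ω = j then μ ω else 0 := by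
        intro i j
        rw [hM i j]
        unfold pr
        exact Finset.sum_congr rfl fun ω _ => by congr
      simp only [this]
      have e1 : ∀ i : Fin m, ∑ j : Fin n, ∑ ω, (if α ω = i ∧ β ω = j then μ ω else 0)
          = ∑ ω, ∑ j : Fin n, (if α ω = i ∧ β ω = j then μ ω else 0) :=
        fun i => Finset.sum_comm
      simp only [e1]
      rw [Finset.sum_comm]
      apply Finset.sum_congr rfl
      intro ω _
      simp only [ite_and, Finset.sum_ite_irrel, Finset.sum_ite_eq, Finset.mem_univ, if_true,
        Finset.sum_const_zero]
    obtain ⟨k, hk⟩ := good_of_not_block M h0 h1 hnb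
    refine ⟨k, aux_transfer k _ _ _ μ α β ?_ hk⟩
    intro a b
    rw [← hM a b]
    exact pr_pair M a b
end
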